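/- For the preprojective algebra A₁ = KQ/I′ of type D₄ over an algebraically closed field K of characteristic 2, the second Hochschild cohomology group HH²(A₁) is a K-vector space of dimension 3. -/

import Mathlib

/-!  The quiver `Q` of type `D₄`: vertices `1, 2, 3, 4` and arrows
`α : 1 → 4`, `β : 4 → 1`, `γ : 3 → 4`, `δ : 4 → 3`, `ε : 4 → 2`, `ξ : 2 → 4`.
The path algebra `KQ` is presented as the quotient of the free algebra on the
four vertex idempotents `e1, e2, e3, e4` and the six arrows, by the standard
path-algebra relations (orthogonal idempotents summing to `1`, and each arrow
`a : v → w` satisfying `e_v * a = a = a * e_w`, paths being written from left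
to right). -/

/-- Generators of the path algebra: the four vertices and the six arrows. -/
inductive QGen : Type
  | e1 | e2 | e3 | e4 | α | β | γ | δ | ε | ξ
  deriving DecidableEq

namespace PathAlgD4

open QGen

/-- The source vertex of each arrow. -/
def src : QGen → QGen
  | .α => .e1 | .β => .e4 | .γ => .e3 | .δ => .e4 | .ε => .e4 | .ξ => .e2
  | v => v

/-- The target vertex of each arrow. -/
def tgt : QGen → QGen
  | .α => .e4 | .β => .e1 | .γ => .e4 | .δ => .e3 | .ε => .e2 | .ξ => .e4
  | v => v

/-- The generator `g` is a vertex. -/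
def IsVertex (g : QGen) : Prop := g = .e1 ∨ g = .e2 ∨ g = .e3 ∨ g = .e4

/-- The generator `g` is an arrow. -/
def IsArrow (g : QGen) : Prop := g = .α ∨ g = .β ∨ g = .γ ∨ g = .δ ∨ g = .ε ∨ g = .ξ

variable (K : Type) [Field K]

/-- The defining relations of the path algebra of the quiver `Q`, as a quotient
of the free algebra on the vertices and arrows. -/
inductive PathRel : FreeAlgebra K QGen → FreeAlgebra K QGen → Prop
  | vertex_mul (v w : QGen) (hv : IsVertex v) (hw : IsVertex w) :
      PathRel (FreeAlgebra.ι K v * FreeAlgebra.ι K w)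
        (if v = w then FreeAlgebra.ι K v else 0)
  | vertex_sum :
      PathRel (FreeAlgebra.ι K .e1 + FreeAlgebra.ι K .e2 +
        FreeAlgebra.ι K .e3 + FreeAlgebra.ι K .e4) 1
  | src_mul (a : QGen) (ha : IsArrow a) :
      PathRel (FreeAlgebra.ι K (src a) * FreeAlgebra.ι K a) (FreeAlgebra.ι K a)
  | mul_tgt (a : QGen) (ha : IsArrow a) :
      PathRel (FreeAlgebra.ι K a * FreeAlgebra.ι K (tgt a)) (FreeAlgebra.ι K a)
  | orth_mul (v a : QGen) (hv : IsVertex v) (ha : IsArrow a) (h : v ≠ src a) :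
      PathRel (FreeAlgebra.ι K v * FreeAlgebra.ι K a) 0
  | mul_orth (a v : QGen) (ha : IsArrow a) (hv : IsVertex v) (h : v ≠ tgt a) :
      PathRel (FreeAlgebra.ι K a * FreeAlgebra.ι K v) 0

/-- The path algebra `KQ` of the quiver `Q` over `K`. -/
abbrev PathAlg : Type := RingQuot (PathRel K)

/-- The image in the path algebra `KQ` of a generator (vertex or arrow). -/
noncomputable def gen (g : QGen) : PathAlg K :=
  RingQuot.mkAlgHom K (PathRel K) (FreeAlgebra.ι K g)


open scoped TensorProduct
open CategoryTheory

variable (K : Type) [Field K]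

/-- The two-sided ideal `I′` of `KQ` generated by `αβ, ξε, γδ, βα + δγ + εξ`
(paths written from left to right). -/
noncomputable def idealA1 : TwoSidedIdeal (PathAlg K) :=
  TwoSidedIdeal.span
    {gen K .α * gen K .β,
     gen K .ξ * gen K .ε,
     gen K .γ * gen K .δ,
     gen K .β * gen K .α + gen K .δ * gen K .γ + gen K .ε * gen K .ξ}

/-- The preprojective algebra `A₁ = KQ/I′` of type `D₄`. -/
abbrev AlgA1 : Type := (idealA1 K).ringCon.Quotient

noncomputable instance : Algebra K (AlgA1 K) :=
  Algebra.mk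
    (show K →+* AlgA1 K from
      (RingCon.mk' (idealA1 K).ringCon).comp (algebraMap K (PathAlg K)))
    (fun k x => by
      induction x using Quotient.ind'
      exact congrArg Quotient.mk'' (Algebra.commutes k _))
    (fun k x => by
      induction x using Quotient.ind'
      exact congrArg Quotient.mk'' (Algebra.smul_def k _))

/-- The second Hochschild cohomology group `HH²(Λ) = Ext²_{Λ ⊗[K] Λᵐᵒᵖ}(Λ, Λ)` of a
`K`-algebra `Λ`, as a `K`-vector space; `Λ` is regarded as a module over its enveloping
algebra `Λ ⊗[K] Λᵐᵒᵖ` via `(a ⊗ bᵒᵖ) • m = a * m * b`. -/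
noncomputable def HH2 (A : Type) [Ring A] [Algebra K A] : ModuleCat K :=
  letI : Module (A ⊗[K] Aᵐᵒᵖ) A := TensorProduct.Algebra.module
  ((Ext K (ModuleCat (A ⊗[K] Aᵐᵒᵖ)) 2).obj
    (Opposite.op (ModuleCat.of (A ⊗[K] Aᵐᵒᵖ) A))).obj (ModuleCat.of (A ⊗[K] Aᵐᵒᵖ) A)

/-! The `D₄` preprojective algebra `A` has a bimodule resolution that begins
`P₃ ⟶ P₂ ⟶ P₁ ⟶ P₀ ⟶ A`, where `P₀` and `P₂` have one free generator `eᵢ ⊗ eᵢ` for each vertex and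
`P₁` has one for each arrow. Exactness at `P₁` says that the bimodule presented by the arrows and
the preprojective relations carries the universal derivation of `A`, which follows from the
universal property of `A` applied to trivial square-zero extensions. Since `A` is a Frobenius
algebra, the kernel of `P₂ ⟶ P₁` is generated by the copairing of the Frobenius form. A bimodule
map `P₂ ⟶ A` is a family of elements of the local algebras `eᵢ A eᵢ`. The pairings, under the
Frobenius form, with the central elements `1`, `w` (the loop of length four at the centre of the
diagram) and `s₀` (a socle element at a leaf) identify the cocycles modulo the coboundaries with
`K³`. -/

/-- An injective linear map carrying `Z` to `Z'` and `B` to `B'` identifies the subquotients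
`Z / (B ∩ Z)` and `Z' / (B' ∩ Z')`. -/
noncomputable def subquotientEquiv {k V V' : Type*} [Ring k] [AddCommGroup V] [Module k V]
    [AddCommGroup V'] [Module k V'] (f : V →ₗ[k] V') (hf : Function.Injective f)
    {Z B : Submodule k V} {Z' B' : Submodule k V'} (hZ : Z.map f = Z') (hB : B.map f = B') :
    (Z ⧸ B.submoduleOf Z) ≃ₗ[k] Z' ⧸ B'.submoduleOf Z' :=
  Submodule.Quotient.equiv _ _
    ((Z.equivMapOfInjective f hf).trans (LinearEquiv.ofEq _ _ hZ)) (by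
      subst hZ hB
      ext ⟨_, x, hx, rfl⟩
      have hx' : (Z.equivMapOfInjective f hf).symm ⟨f x, Z.mem_map_of_mem hx⟩ = ⟨x, hx⟩ :=
        (LinearEquiv.symm_apply_eq _).2 rfl
      simp [Submodule.submoduleOf, hx', hf.eq_iff])

/-- The homology of a short complex `S` of modules as the subquotient `ker S.g / range S.f`. -/
noncomputable def homologyEquiv {k : Type*} [Ring k] (S : ShortComplex (ModuleCat k)) :
    S.homology ≃ₗ[k]
      LinearMap.ker S.g.hom ⧸ (LinearMap.range S.f.hom).submoduleOf (LinearMap.ker S.g.hom) :=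
  S.moduleCatHomologyIso.toLinearEquiv ≪≫ₗ Submodule.quotEquivOfEq _ _ (by
    ext x
    simp only [Submodule.submoduleOf, Submodule.mem_comap, LinearMap.mem_range, Subtype.ext_iff]
    rfl)

section TruncatedResolution

open Limits

universe w v u

variable {C : Type u} [Category.{v} C] [Abelian C] [EnoughProjectives C]
  {M X₀ X₁ X₂ : C} (p : X₀ ⟶ M) (d₁ : X₁ ⟶ X₀) (d₂ : X₂ ⟶ X₁) (w : d₂ ≫ d₁ = 0)

/-- The consecutive pairs of differentials of `prolongation`: the pair `(d₂, d₁)`, followed by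
projective covers of successive kernels. -/
noncomputable def prolongationAux : ℕ → ShortComplex C :=
  ChainComplex.mkAux X₀ X₁ X₂ d₁ d₂ w fun S ↦
    ⟨Projective.over (kernel S.f), Projective.π (kernel S.f) ≫ kernel.ι S.f, by simp⟩

/-- The complex `X₂ ⟶ X₁ ⟶ X₀` prolonged to the left by projective covers of the successive
kernels. -/
noncomputable def prolongation : ChainComplex C ℕ :=
  ChainComplex.of (fun n ↦ (prolongationAux d₁ d₂ w n).X₃)
    (fun n ↦ (prolongationAux d₁ d₂ w n).g) fun n ↦ (prolongationAux d₁ d₂ w n).zero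

lemma prolongation_d (n : ℕ) :
    (prolongation d₁ d₂ w).d (n + 1) n = (prolongationAux d₁ d₂ w n).g :=
  ChainComplex.of_d (fun n ↦ (prolongationAux d₁ d₂ w n).X₃)
    (fun n ↦ (prolongationAux d₁ d₂ w n).g) n

variable {w}

lemma prolongationAux_exact (h : (ShortComplex.mk d₂ d₁ w).Exact) (n : ℕ) :
    (prolongationAux d₁ d₂ w n).Exact := by
  cases n with
  | zero => exact h
  | succ n => exact exact_d_f _

lemma prolongation_exactAt_succ (h : (ShortComplex.mk d₂ d₁ w).Exact) (n : ℕ) :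
    (prolongation d₁ d₂ w).ExactAt (n + 1) := by
  rw [HomologicalComplex.exactAt_iff' _ (n + 1 + 1) (n + 1) n (by simp) (by simp)]
  have sc_eq : (prolongation d₁ d₂ w).sc' (n + 1 + 1) (n + 1) n = prolongationAux d₁ d₂ w n := by
    change ShortComplex.mk ((prolongation d₁ d₂ w).d (n + 1 + 1) (n + 1))
      ((prolongation d₁ d₂ w).d (n + 1) n) _ = _
    simp only [prolongation_d]
    rfl
  exact sc_eq ▸ prolongationAux_exact d₁ d₂ h n

lemma prolongation_projective [h₀ : Projective X₀] [h₁ : Projective X₁] [h₂ : Projective X₂]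
    (n : ℕ) : Projective ((prolongation d₁ d₂ w).X n) := by
  obtain _ | _ | _ | n := n
  · exact h₀
  · exact h₁
  · exact h₂
  · exact Projective.projective_over _

variable {p} {w₀ : d₁ ≫ p = 0}

/-- The projective resolution starting with a given exact sequence
`X₂ ⟶ X₁ ⟶ X₀ ⟶ M ⟶ 0` of projective objects `Xᵢ`. -/
noncomputable def prolongedResolution [Projective X₀] [Projective X₁] [Projective X₂] [Epi p]
    (h₀ : (ShortComplex.mk d₁ p w₀).Exact) (h₁ : (ShortComplex.mk d₂ d₁ w).Exact) :
    ProjectiveResolution M where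
  complex := prolongation d₁ d₂ w
  projective := prolongation_projective d₁ d₂
  π := (ChainComplex.toSingle₀Equiv _ _).symm
    ⟨p, (congrArg (· ≫ p) (prolongation_d d₁ d₂ w 0)).trans w₀⟩
  quasiIso := ⟨fun n ↦ by
    cases n with
    | zero =>
      rw [ChainComplex.quasiIsoAt₀_iff, ShortComplex.quasiIso_iff_of_zeros']
      · refine (ShortComplex.exact_and_epi_g_iff_of_iso ?_).2 ⟨h₀, ‹Epi p›⟩
        refine ShortComplex.isoMk (Iso.refl _) (Iso.refl _) (Iso.refl _) ?_ ?_
        · exact (Category.id_comp _).trans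
            ((prolongation_d d₁ d₂ w 0).symm.trans (Category.comp_id _).symm)
        · exact (Category.id_comp _).trans
            ((ChainComplex.toSingle₀Equiv_symm_apply_f_zero (C := prolongation d₁ d₂ w) p
              ((congrArg (· ≫ p) (prolongation_d d₁ d₂ w 0)).trans w₀)).symm.trans
              (Category.comp_id _).symm)
      all_goals rfl
    | succ n =>
      rw [quasiIsoAt_iff_exactAt']
      · exact prolongation_exactAt_succ d₁ d₂ h₁ n
      · exact ChainComplex.exactAt_succ_single_obj _ _⟩

variable (k : Type w) [Ring k] [Linear k C] (Y : C)

/-- The part of the complex `Hom(P, Y)` computing `Ext²`, where `P` is the resolution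
`prolongedResolution`. -/
noncomputable def homShortComplex : ShortComplex (ModuleCat k) where
  X₁ := ModuleCat.of k (X₁ ⟶ Y)
  X₂ := ModuleCat.of k (X₂ ⟶ Y)
  X₃ := ModuleCat.of k (Projective.syzygies d₂ ⟶ Y)
  f := ModuleCat.ofHom (Linear.leftComp k Y d₂)
  g := ModuleCat.ofHom (Linear.leftComp k Y (Projective.d d₂))
  zero := by
    ext f
    change (Projective.π (kernel d₂) ≫ kernel.ι d₂) ≫ d₂ ≫ f = 0
    simp

/-- `Ext²` computed by any exact sequence `X₂ ⟶ X₁ ⟶ X₀ ⟶ M ⟶ 0` of projective objects `Xᵢ`. -/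
noncomputable def extTwoIso [Projective X₀] [Projective X₁] [Projective X₂] [Epi p]
    (h₀ : (ShortComplex.mk d₁ p w₀).Exact) (h₁ : (ShortComplex.mk d₂ d₁ w).Exact) :
    ((Ext k C 2).obj (Opposite.op M)).obj Y ≅ (homShortComplex d₂ k Y).homology :=
  let P := prolongedResolution d₁ d₂ h₀ h₁
  let cx := P.complex.linearYonedaObj k Y
  have hf : P.complex.d 2 1 = d₂ := prolongation_d d₁ d₂ w 1
  have hg : P.complex.d 3 2 = Projective.d d₂ := prolongation_d d₁ d₂ w 2
  P.isoExt 2 Y ≪≫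
    ShortComplex.homologyMapIso (cx.isoSc' 1 2 3 (by simp) (by simp) ≪≫
      ShortComplex.isoMk (S₂ := homShortComplex d₂ k Y) (Iso.refl _) (Iso.refl _) (Iso.refl _)
        (ModuleCat.hom_ext (LinearMap.ext fun f ↦ (congrArg (· ≫ f) hf).symm))
        (ModuleCat.hom_ext (LinearMap.ext fun f ↦ (congrArg (· ≫ f) hg).symm)))

/-- `extTwoIso` with the cohomology written as a subquotient of `Hom(X₂, Y)`. -/
noncomputable def extTwoLinearEquiv [Projective X₀] [Projective X₁] [Projective X₂] [Epi p]
    (h₀ : (ShortComplex.mk d₁ p w₀).Exact) (h₁ : (ShortComplex.mk d₂ d₁ w).Exact) :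
    ((Ext k C 2).obj (Opposite.op M)).obj Y ≃ₗ[k]
      LinearMap.ker (Linear.leftComp k Y (Projective.d d₂)) ⧸
        (LinearMap.range (Linear.leftComp k Y d₂)).submoduleOf
          (LinearMap.ker (Linear.leftComp k Y (Projective.d d₂))) :=
  (extTwoIso d₁ d₂ k Y h₀ h₁).toLinearEquiv ≪≫ₗ homologyEquiv (homShortComplex d₂ k Y)

end TruncatedResolution

universe u

section ExtTwo

variable {k R M N P₀ P₁ P₂ P₃ : Type u} [Field k] [Ring R] [Algebra k R]
  [AddCommGroup M] [Module R M] [AddCommGroup N] [Module k N] [Module R N] [IsScalarTower k R N]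
  [AddCommGroup P₀] [Module R P₀] [AddCommGroup P₁] [Module R P₁]
  [AddCommGroup P₂] [Module R P₂] [AddCommGroup P₃] [Module R P₃]

lemma comp_eq_zero_iff_of_exact {Q : Type*} [AddCommGroup Q] [Module R Q]
    {f : P₃ →ₗ[R] P₂} {f' : Q →ₗ[R] P₂} {g : P₂ →ₗ[R] P₁}
    (hf : Function.Exact f g) (hf' : Function.Exact f' g) (h : P₂ →ₗ[R] N) :
    h ∘ₗ f = 0 ↔ h ∘ₗ f' = 0 := by
  rw [← LinearMap.range_le_ker_iff, ← LinearMap.range_le_ker_iff, ← LinearMap.exact_iff.1 hf,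
    LinearMap.exact_iff.1 hf']

variable (k) in
/-- Morphisms of `R`-modules as a `k`-module, where `k` acts on `N` by a given structure rather
than through restriction of scalars along `algebraMap k R`. -/
noncomputable def homEquiv :
    letI : Module k (ModuleCat.of R M ⟶ ModuleCat.of R N) := Linear.homModule _ _
    (ModuleCat.of R M ⟶ ModuleCat.of R N) ≃ₗ[k] M →ₗ[R] N :=
  letI : Module k (ModuleCat.of R M ⟶ ModuleCat.of R N) := Linear.homModule _ _
  { ModuleCat.homAddEquiv with
    map_smul' := fun c f ↦ by
      ext x
      exact algebraMap_smul R c (f.hom x) }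

lemma exact_projective_d (d : P₂ →ₗ[R] P₁) :
    Function.Exact (Projective.d (ModuleCat.ofHom d)).hom d :=
  (ShortComplex.ShortExact.moduleCat_exact_iff_function_exact _).1 (exact_d_f (ModuleCat.ofHom d))

variable (k N) in
/-- `Ext²` as the cohomology of `Hom(P₁, N) ⟶ Hom(P₂, N) ⟶ Hom(P₃, N)`, for an exact sequence
`P₃ ⟶ P₂ ⟶ P₁ ⟶ P₀ ⟶ M ⟶ 0` in which `P₀`, `P₁` and `P₂` are projective. -/
noncomputable def extTwoEquiv [Module.Projective R P₀] [Module.Projective R P₁]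
    [Module.Projective R P₂] {p : P₀ →ₗ[R] M} {d₁ : P₁ →ₗ[R] P₀} {d₂ : P₂ →ₗ[R] P₁}
    {d₃ : P₃ →ₗ[R] P₂} (hp : Function.Surjective p) (h₀ : Function.Exact d₁ p)
    (h₁ : Function.Exact d₂ d₁) (h₂ : Function.Exact d₃ d₂) :
    (((Ext k (ModuleCat.{u} R) 2).obj (Opposite.op (ModuleCat.of R M))).obj
      (ModuleCat.of R N)) ≃ₗ[k]
    (LinearMap.ker (d₃.lcomp k N)) ⧸
      (LinearMap.range (d₂.lcomp k N)).submoduleOf (LinearMap.ker (d₃.lcomp k N)) :=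
  have : Epi (ModuleCat.ofHom p) := (ModuleCat.epi_iff_surjective _).2 hp
  have : Projective (ModuleCat.of R P₀) := (IsProjective.iff_projective P₀).1 inferInstance
  have : Projective (ModuleCat.of R P₁) := (IsProjective.iff_projective P₁).1 inferInstance
  have : Projective (ModuleCat.of R P₂) := (IsProjective.iff_projective P₂).1 inferInstance
  have w₀ : ModuleCat.ofHom d₁ ≫ ModuleCat.ofHom p = 0 :=
    ModuleCat.hom_ext (LinearMap.ext h₀.apply_apply_eq_zero)
  have w₁ : ModuleCat.ofHom d₂ ≫ ModuleCat.ofHom d₁ = 0 :=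
    ModuleCat.hom_ext (LinearMap.ext h₁.apply_apply_eq_zero)
  have exact₁ := (ShortComplex.ShortExact.moduleCat_exact_iff_function_exact
    (ShortComplex.mk _ _ w₁)).2 h₁
  letI : Module k (ModuleCat.of R P₂ ⟶ ModuleCat.of R N) := Linear.homModule _ _
  (extTwoLinearEquiv (ModuleCat.ofHom d₁) (ModuleCat.ofHom d₂) k (ModuleCat.of R N)
    ((ShortComplex.ShortExact.moduleCat_exact_iff_function_exact
      (ShortComplex.mk _ _ w₀)).2 h₀) exact₁) ≪≫ₗ
    subquotientEquiv (homEquiv k).toLinearMap (homEquiv k).injective (by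
      ext f
      trans f ∘ₗ (Projective.d (ModuleCat.ofHom d₂)).hom = 0
      · refine ⟨?_, fun hf ↦ ⟨ModuleCat.ofHom f, ModuleCat.hom_ext hf, rfl⟩⟩
        rintro ⟨g, hg, rfl⟩
        exact congrArg ModuleCat.Hom.hom hg
      · exact comp_eq_zero_iff_of_exact (exact_projective_d d₂) h₂ f) (by
      ext f
      constructor
      · rintro ⟨_, ⟨g, rfl⟩, rfl⟩
        exact ⟨g.hom, rfl⟩
      · rintro ⟨g, rfl⟩
        exact ⟨_, ⟨ModuleCat.ofHom g, rfl⟩, rfl⟩)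

end ExtTwo

section Envelope

variable (k A : Type u) [CommRing k] [Ring A] [Algebra k A]

/-- The enveloping algebra of `A`, whose modules are the `A`-bimodules. It is a `def` so that its
ring structure is found as one instance instead of being assembled from the tensor product. -/
def Envelope : Type u := A ⊗[k] Aᵐᵒᵖ

noncomputable instance : Ring (Envelope k A) := inferInstanceAs (Ring (A ⊗[k] Aᵐᵒᵖ))

noncomputable instance : Algebra k (Envelope k A) := inferInstanceAs (Algebra k (A ⊗[k] Aᵐᵒᵖ))

noncomputable instance : Module (Envelope k A) A :=
  (TensorProduct.Algebra.module : Module (A ⊗[k] Aᵐᵒᵖ) A)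

variable {A}

/-- The elements `x ⊗ 1` of the enveloping algebra, which act on bimodules by left
multiplication. -/
noncomputable def leftMul : A →ₐ[k] Envelope k A :=
  (Algebra.TensorProduct.includeLeft : A →ₐ[k] A ⊗[k] Aᵐᵒᵖ)

/-- The inclusion of `Aᵐᵒᵖ` into the enveloping algebra. -/
noncomputable def opHom : Aᵐᵒᵖ →ₐ[k] Envelope k A :=
  (Algebra.TensorProduct.includeRight : Aᵐᵒᵖ →ₐ[k] A ⊗[k] Aᵐᵒᵖ)

/-- The elements `1 ⊗ xᵒᵖ` of the enveloping algebra, which act on bimodules by right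
multiplication. -/
noncomputable def rightMul : A →ₗ[k] Envelope k A :=
  (opHom k).toLinearMap ∘ₗ (MulOpposite.opLinearEquiv k).toLinearMap

lemma leftMul_mul_rightMul (x y : A) :
    leftMul k x * rightMul k y = (x ⊗ₜ[k] MulOpposite.op y : A ⊗[k] Aᵐᵒᵖ) :=
  (Algebra.TensorProduct.tmul_mul_tmul x 1 1 (MulOpposite.op y)).trans (by rw [mul_one, one_mul])

lemma commute_leftMul_rightMul (x y : A) : Commute (leftMul k x) (rightMul k y) :=
  (leftMul_mul_rightMul k x y).trans <| .symm <|
    (Algebra.TensorProduct.tmul_mul_tmul 1 x (MulOpposite.op y) 1).trans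
      (by rw [mul_one, one_mul])

lemma rightMul_one : rightMul k (1 : A) = 1 := rfl

lemma rightMul_mul (x y : A) : rightMul k (x * y) = rightMul k y * rightMul k x :=
  map_mul (opHom k) (MulOpposite.op y) (MulOpposite.op x)

lemma rightMul_algebraMap (c : k) :
    rightMul k (algebraMap k A c) = leftMul k (algebraMap k A c) := by
  rw [Algebra.algebraMap_eq_smul_one, map_smul, map_smul, rightMul_one, map_one]

lemma leftMul_smul (x m : A) : leftMul k x • m = x * m :=
  (TensorProduct.Algebra.smul_def x 1 m).trans (by rw [one_smul, smul_eq_mul])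

lemma rightMul_smul (x m : A) : rightMul k x • m = m * x :=
  (TensorProduct.Algebra.smul_def 1 (MulOpposite.op x) m).trans
    (by rw [one_smul, op_smul_eq_mul])

variable {k}

lemma Envelope.induction {motive : Envelope k A → Prop} (r : Envelope k A)
    (mul : ∀ x y, motive (leftMul k x * rightMul k y))
    (add : ∀ r s, motive r → motive s → motive (r + s)) : motive r := by
  refine TensorProduct.induction_on r ?_ (fun x y ↦ ?_) add
  · have zero := mul 0 0
    rw [map_zero, zero_mul] at zero
    exact zero
  · exact leftMul_mul_rightMul k x y.unop ▸ mul x y.unop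

lemma Envelope.exists_eq_sum (r : Envelope k A) :
    ∃ S : Finset (A × Aᵐᵒᵖ), r = ∑ p ∈ S, leftMul k p.1 * rightMul k p.2.unop := by
  obtain ⟨S, hS⟩ := TensorProduct.exists_finset (R := k) (M := A) (N := Aᵐᵒᵖ) r
  refine ⟨S, hS.trans (Finset.sum_congr rfl fun p _ ↦ ?_)⟩
  rw [leftMul_mul_rightMul, MulOpposite.op_unop]

/-- The linear map `x ⊗ yᵒᵖ ↦ f x y`. -/
noncomputable def Envelope.lift {M : Type*} [AddCommGroup M] [Module k M]
    (f : A →ₗ[k] A →ₗ[k] M) : Envelope k A →ₗ[k] M :=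
  TensorProduct.lift (f.compl₂ (MulOpposite.opLinearEquiv k).symm.toLinearMap)

lemma Envelope.lift_mul {M : Type*} [AddCommGroup M] [Module k M]
    (f : A →ₗ[k] A →ₗ[k] M) (x y : A) :
    Envelope.lift f (leftMul k x * rightMul k y) = f x y := by
  rw [leftMul_mul_rightMul]
  exact TensorProduct.lift.tmul _ _

instance : IsScalarTower k (Envelope k A) A :=
  ⟨fun c r m ↦ by
    induction r using Envelope.induction with
    | mul x y =>
      rw [← smul_mul_assoc, ← map_smul, mul_smul, mul_smul, leftMul_smul, leftMul_smul,
        smul_mul_assoc]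
    | add r s hr hs => rw [smul_add, add_smul, hr, hs, add_smul, smul_add]⟩

/-- Writing `z = ∑ pᵢ ⊗ qᵢᵒᵖ`, this says `∑ pᵢ x ⊗ qᵢᵒᵖ = ∑ pᵢ ⊗ (x qᵢ)ᵒᵖ`: the element is balanced
over `A` in its two inner positions. -/
def IsBalanced (z : Envelope k A) : Prop := ∀ x : A, z * leftMul k x = z * rightMul k x

lemma IsBalanced.of_adjoin_eq_top {s : Set A} (hs : Algebra.adjoin k s = ⊤) {z : Envelope k A}
    (hz : ∀ x ∈ s, z * leftMul k x = z * rightMul k x) : IsBalanced z := by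
  intro x
  have hx : x ∈ Algebra.adjoin k s := hs ▸ Algebra.mem_top
  induction hx using Algebra.adjoin_induction with
  | mem x hx => exact hz x hx
  | algebraMap c => rw [rightMul_algebraMap]
  | add x y _ _ hx hy => simp only [map_add, mul_add, hx, hy]
  | mul x y _ _ hx hy =>
    calc z * leftMul k (x * y) = z * leftMul k x * leftMul k y := by rw [map_mul, mul_assoc]
      _ = z * leftMul k y * rightMul k x := by
        rw [hx, mul_assoc, ← (commute_leftMul_rightMul k y x).eq, mul_assoc]
      _ = z * rightMul k (x * y) := by rw [hy, rightMul_mul, mul_assoc]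

end Envelope

/-- A double quiver with vertices `I` and arrows `J`: every arrow has a reverse arrow. -/
structure DoubleQuiver (I J : Type*) where
  src : J → I
  tgt : J → I
  rev : J → J
  rev_rev : Function.Involutive rev
  src_rev : ∀ j, src (rev j) = tgt j

/-- Elements of a ring satisfying the relations of the preprojective algebra of a double quiver;
paths are written from left to right. The preprojective relation is stated without signs, which is
the usual one in characteristic two. -/
structure PreprojectiveFamily {I J : Type*} [Fintype I] [Fintype J] (Q : DoubleQuiver I J)
    {T : Type*} [Ring T] (e : I → T) (a : J → T) : Prop
    extends CompleteOrthogonalIdempotents e where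
  src_mul : ∀ j, e (Q.src j) * a j = a j
  mul_tgt : ∀ j, a j * e (Q.tgt j) = a j
  relation : ∑ j, a j * a (Q.rev j) = 0

/-- `A` is the preprojective algebra of the double quiver `Q`, with vertex idempotents `e` and
arrows `a`. -/
structure IsPreprojectiveAlgebra (k : Type u) [CommRing k] {I J : Type} [Fintype I] [Fintype J]
    (Q : DoubleQuiver I J) {A : Type u} [Ring A] [Algebra k A] (e : I → A) (a : J → A) : Prop
    extends PreprojectiveFamily Q e a where
  adjoin_eq_top : Algebra.adjoin k (Set.range e ∪ Set.range a) = ⊤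
  exists_lift : ∀ {T : Type u} [Ring T] [Algebra k T] {e' : I → T} {a' : J → T},
    PreprojectiveFamily Q e' a' →
      ∃ φ : A →ₐ[k] T, (∀ i, φ (e i) = e' i) ∧ ∀ j, φ (a j) = a' j

section Quiver

variable {I J : Type*} (Q : DoubleQuiver I J)

lemma DoubleQuiver.tgt_rev (j : J) : Q.tgt (Q.rev j) = Q.src j := by
  rw [← Q.src_rev, Q.rev_rev]

lemma DoubleQuiver.sum_rev [Fintype J] {M : Type*} [AddCommMonoid M] (f : J → M) :
    ∑ j, f (Q.rev j) = ∑ j, f j :=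
  Equiv.sum_comp Q.rev_rev.toPerm f

end Quiver

section Corner

variable {R M : Type*} [Ring R] [AddCommGroup M] [Module R M]

/-- The left ideal `{x | x * u = x}`, which is the projective module `R * u` when `u` is
idempotent. -/
def corner (u : R) : Submodule R R where
  carrier := {x | x * u = x}
  add_mem' {x y} hx hy := by rw [Set.mem_ofPred_eq] at *; rw [add_mul, hx, hy]
  zero_mem' := zero_mul u
  smul_mem' r x hx := by rw [Set.mem_ofPred_eq, smul_eq_mul, mul_assoc, hx]

/-- The idempotent `u` as the generator of `R * u`. -/
def cornerUnit {u : R} (hu : IsIdempotentElem u) : corner u := ⟨u, hu⟩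

/-- The linear map `R * u → M` sending a generator to `u • m`. -/
def fromCorner (u : R) (m : M) : corner u →ₗ[R] M :=
  LinearMap.toSpanSingleton R M m ∘ₗ (corner u).subtype

lemma fromCorner_apply (u : R) (m : M) (x : corner u) : fromCorner u m x = (x : R) • m := rfl

lemma smul_cornerUnit {u : R} (hu : IsIdempotentElem u) (x : corner u) :
    (x : R) • cornerUnit hu = x :=
  Subtype.ext x.2

lemma map_cornerUnit {u : R} (hu : IsIdempotentElem u) (f : corner u →ₗ[R] M) (x : corner u) :
    f x = (x : R) • f (cornerUnit hu) := by
  rw [← map_smul, smul_cornerUnit]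

lemma corner_projective {u : R} (hu : IsIdempotentElem u) : Module.Projective R (corner u) :=
  .of_split (corner u).subtype (LinearMap.toSpanSingleton R _ (cornerUnit hu))
    (LinearMap.ext (smul_cornerUnit hu))

lemma pi_corner_projective {J : Type*} [Finite J] {u : J → R}
    (hu : ∀ j, IsIdempotentElem (u j)) : Module.Projective R (∀ j, corner (u j)) :=
  .of_split (LinearMap.pi fun j ↦ (corner (u j)).subtype ∘ₗ LinearMap.proj j)
    (LinearMap.pi fun j ↦ LinearMap.toSpanSingleton R _ (cornerUnit (hu j)) ∘ₗ LinearMap.proj j)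
    (LinearMap.ext fun v ↦ funext fun j ↦ smul_cornerUnit (hu j) (v j))

end Corner

section Resolution

variable {k : Type u} {I J : Type} {A : Type u} [CommRing k] [Ring A] [Algebra k A]
  {Q : DoubleQuiver I J} {e : I → A} {a : J → A}

local notation "𝓁" => leftMul k
local notation "𝓇" => rightMul k

variable (k Q e) in
/-- The idempotent `eₛ ⊗ eₜ` of the enveloping algebra, where `j : s → t`. -/
noncomputable def arrowUnit (j : J) : Envelope k A := 𝓁 (e (Q.src j)) * 𝓇 (e (Q.tgt j))

lemma isIdempotentElem_arrowUnit (he : OrthogonalIdempotents e) (j : J) :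
    IsIdempotentElem (arrowUnit k Q e j) :=
  (IsIdempotentElem.map (he.idem (Q.src j)) 𝓁).mul_of_commute
    (commute_leftMul_rightMul k _ _) (by rw [IsIdempotentElem, ← rightMul_mul, he.idem])

variable [Fintype I]

variable (k e) in
/-- The idempotent `∑ eᵢ ⊗ eᵢ` of the enveloping algebra. -/
noncomputable def vertexUnit : Envelope k A := ∑ i, 𝓁 (e i) * 𝓇 (e i)

local notation "η" => vertexUnit k e

lemma vertexUnit_smul (m : A) : η • m = ∑ i, e i * m * e i := by
  simp only [vertexUnit, Finset.sum_smul, mul_smul, rightMul_smul, leftMul_smul, mul_assoc]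

lemma IsBalanced.mul_vertexUnit {z : Envelope k A} (hz : IsBalanced z)
    (he : CompleteOrthogonalIdempotents e) : z * η = z := by
  have mul_idem (i : I) : z * (𝓁 (e i) * 𝓇 (e i)) = z * 𝓁 (e i) := by
    rw [(commute_leftMul_rightMul k _ _).eq, ← mul_assoc, ← hz, mul_assoc, ← map_mul, he.idem i]
  rw [vertexUnit, Finset.mul_sum, Finset.sum_congr rfl fun i _ ↦ mul_idem i, ← Finset.mul_sum,
    ← map_sum, he.complete, map_one, mul_one]

section OrthogonalIdempotents

variable (he : OrthogonalIdempotents e) {i : I} {x : A}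
include he

lemma leftMul_mul_vertexUnit (i : I) : 𝓁 (e i) * η = 𝓁 (e i) * 𝓇 (e i) := by
  classical
  simp [vertexUnit, Finset.mul_sum, ← mul_assoc, ← map_mul, he.mul_eq, apply_ite, ite_mul]

lemma rightMul_mul_vertexUnit (i : I) : 𝓇 (e i) * η = 𝓁 (e i) * 𝓇 (e i) := by
  classical
  simp [vertexUnit, Finset.mul_sum, (commute_leftMul_rightMul k _ _).eq, ← mul_assoc,
    ← rightMul_mul, he.mul_eq, apply_ite, ite_mul]

lemma vertexUnit_mul_leftMul (hx : e i * x = x) : η * 𝓁 x = 𝓁 x * 𝓇 (e i) := by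
  classical
  rw [← hx]
  simp [vertexUnit, Finset.sum_mul, (commute_leftMul_rightMul k _ _).eq, mul_assoc,
    ← map_mul, ← mul_assoc (e _) (e _), he.mul_eq, apply_ite, ite_mul]

lemma vertexUnit_mul_rightMul (hx : x * e i = x) : η * 𝓇 x = 𝓁 (e i) * 𝓇 x := by
  classical
  rw [← hx]
  simp [vertexUnit, Finset.sum_mul, mul_assoc, ← rightMul_mul, he.mul_eq, apply_ite]

lemma isIdempotentElem_vertexUnit : IsIdempotentElem η := by
  have idem_mul (i : I) : 𝓁 (e i) * 𝓇 (e i) * η = 𝓁 (e i) * 𝓇 (e i) := by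
    rw [mul_assoc, rightMul_mul_vertexUnit he, ← mul_assoc, ← map_mul, he.idem i]
  rw [IsIdempotentElem]
  nth_rw 1 [vertexUnit]
  rw [Finset.sum_mul, Finset.sum_congr rfl fun i _ ↦ idem_mul i, vertexUnit]

end OrthogonalIdempotents

lemma vertexUnit_sub_one (he : CompleteOrthogonalIdempotents e) :
    η - 1 = ∑ i, 𝓇 (e i) * (𝓁 (e i) - 𝓇 (e i)) := by
  simp only [vertexUnit, mul_sub, ← rightMul_mul, (he.idem _).eq, Finset.sum_sub_distrib,
    ← map_sum, he.complete, rightMul_one, (commute_leftMul_rightMul k _ _).eq]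

lemma vertexUnit_smul_one (he : CompleteOrthogonalIdempotents e) : η • (1 : A) = 1 := by
  simp only [vertexUnit_smul, mul_one, (he.idem _).eq, he.complete]

namespace PreprojectiveFamily

variable [Fintype J] (h : PreprojectiveFamily Q e a)
include h

lemma relation_rev : ∑ j, a (Q.rev j) * a j = 0 := by
  rw [← Q.sum_rev]
  simpa only [Q.rev_rev _] using h.relation

variable (k) in
lemma sum_rev_mul_sub :
    ∑ j, (𝓁 (a (Q.rev j)) + 𝓇 (a (Q.rev j))) * (𝓁 (a j) - 𝓇 (a j)) = 0 := by
  have cross : ∑ j, 𝓇 (a (Q.rev j)) * 𝓁 (a j) = ∑ j, 𝓁 (a (Q.rev j)) * 𝓇 (a j) := by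
    rw [← Q.sum_rev]
    simp only [Q.rev_rev _, (commute_leftMul_rightMul k _ _).eq]
  simp only [mul_sub, add_mul, Finset.sum_sub_distrib, Finset.sum_add_distrib, cross,
    ← rightMul_mul, ← map_mul, ← map_sum, h.relation, h.relation_rev, map_zero]
  simp

lemma vertexUnit_mul_rev (j : J) :
    η * (𝓁 (a (Q.rev j)) + 𝓇 (a (Q.rev j))) =
      (𝓁 (a (Q.rev j)) + 𝓇 (a (Q.rev j))) * arrowUnit k Q e j := by
  have he := h.toOrthogonalIdempotents
  have hsrc : e (Q.tgt j) * a (Q.rev j) = a (Q.rev j) := by rw [← Q.src_rev, h.src_mul]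
  have htgt : a (Q.rev j) * e (Q.src j) = a (Q.rev j) := by rw [← Q.tgt_rev, h.mul_tgt]
  rw [mul_add, vertexUnit_mul_leftMul he hsrc, vertexUnit_mul_rightMul he htgt, arrowUnit, add_mul,
    ← mul_assoc, ← map_mul, htgt, ← mul_assoc, ← (commute_leftMul_rightMul k _ _).eq, mul_assoc,
    ← rightMul_mul, hsrc]

end PreprojectiveFamily

end Resolution

section Differentials

variable {k : Type u} {I J : Type} [Fintype I] [Fintype J] {A : Type u} [CommRing k] [Ring A]
  [Algebra k A] {Q : DoubleQuiver I J} {e : I → A} {a : J → A}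

local notation "𝓁" => leftMul k
local notation "𝓇" => rightMul k
local notation "η" => vertexUnit k e

lemma PreprojectiveFamily.arrowUnit_mul_sub (h : PreprojectiveFamily Q e a) (j : J) :
    arrowUnit k Q e j * ((𝓁 (a j) - 𝓇 (a j)) * η) = (𝓁 (a j) - 𝓇 (a j)) * η := by
  have he := h.toOrthogonalIdempotents
  have vertex (i : I) : 𝓁 (e i) * η = 𝓇 (e i) * η := by
    rw [leftMul_mul_vertexUnit he, rightMul_mul_vertexUnit he]
  have left : arrowUnit k Q e j * (𝓁 (a j) * η) = 𝓁 (a j) * η := by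
    rw [arrowUnit, (commute_leftMul_rightMul k _ _).eq, mul_assoc, ← mul_assoc (𝓁 _), ← map_mul,
      h.src_mul, ← mul_assoc, ← (commute_leftMul_rightMul k _ _).eq, mul_assoc, ← vertex,
      ← mul_assoc, ← map_mul, h.mul_tgt]
  have right : arrowUnit k Q e j * (𝓇 (a j) * η) = 𝓇 (a j) * η := by
    rw [arrowUnit, mul_assoc, ← mul_assoc (𝓇 _), ← rightMul_mul, h.mul_tgt, ← mul_assoc,
      (commute_leftMul_rightMul k _ _).eq, mul_assoc, vertex, ← mul_assoc, ← rightMul_mul,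
      h.src_mul]
  rw [sub_mul, mul_sub, left, right]

namespace PreprojectiveFamily

variable (k) (h : PreprojectiveFamily Q e a)

/-- The generator of the free bimodule on the vertices. -/
noncomputable def vertexGen : corner η :=
  cornerUnit (isIdempotentElem_vertexUnit h.toOrthogonalIdempotents)

/-- The generator of the summand of the arrow `j` in the free bimodule on the arrows. -/
noncomputable def arrowGen (j : J) : corner (arrowUnit k Q e j) :=
  cornerUnit (isIdempotentElem_arrowUnit h.toOrthogonalIdempotents j)

/-- The differential from the free bimodule on the arrows to the free bimodule on the vertices. -/
noncomputable def d₁ : (∀ j, corner (arrowUnit k Q e j)) →ₗ[Envelope k A] corner η :=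
  ∑ j, fromCorner _ ((𝓁 (a j) - 𝓇 (a j)) • h.vertexGen k) ∘ₗ LinearMap.proj j

/-- The differential from the free bimodule on the relations, one for each vertex, to the free
bimodule on the arrows. -/
noncomputable def d₂ : corner η →ₗ[Envelope k A] ∀ j, corner (arrowUnit k Q e j) :=
  fromCorner η fun j ↦ (𝓁 (a (Q.rev j)) + 𝓇 (a (Q.rev j))) • h.arrowGen k j

variable {k}

lemma d₁_apply (v : ∀ j, corner (arrowUnit k Q e j)) :
    h.d₁ k v = ∑ j, (v j : Envelope k A) • (𝓁 (a j) - 𝓇 (a j)) • h.vertexGen k := by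
  simp [d₁, fromCorner_apply]

lemma d₁_single [DecidableEq J] (j : J) :
    h.d₁ k (Pi.single j (h.arrowGen k j)) = (𝓁 (a j) - 𝓇 (a j)) • h.vertexGen k := by
  rw [d₁_apply, Finset.sum_eq_single j]
  · rw [Pi.single_eq_same]
    exact Subtype.ext (h.arrowUnit_mul_sub j)
  · intro j' _ hj
    rw [Pi.single_eq_of_ne hj, ZeroMemClass.coe_zero, zero_smul]
  · simp

lemma sub_smul_vertexGen_mem_range (ha : Algebra.adjoin k (Set.range e ∪ Set.range a) = ⊤)
    (x : A) : (𝓁 x - 𝓇 x) • h.vertexGen k ∈ LinearMap.range (h.d₁ k) := by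
  classical
  have hx : x ∈ Algebra.adjoin k (Set.range e ∪ Set.range a) := ha ▸ Algebra.mem_top
  induction hx using Algebra.adjoin_induction with
  | mem x hx =>
    rcases hx with ⟨i, rfl⟩ | ⟨j, rfl⟩
    · have he := h.toOrthogonalIdempotents
      convert Submodule.zero_mem _
      refine Subtype.ext ((sub_mul _ _ _).trans (sub_eq_zero.2 ?_))
      exact (leftMul_mul_vertexUnit he i).trans (rightMul_mul_vertexUnit he i).symm
    · exact ⟨_, h.d₁_single j⟩
  | algebraMap c => rw [rightMul_algebraMap, sub_self, zero_smul]; exact Submodule.zero_mem _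
  | add x y _ _ hx hy =>
    rw [map_add, map_add, add_sub_add_comm, add_smul]
    exact Submodule.add_mem _ hx hy
  | mul x y _ _ hx hy =>
    have leibniz : 𝓁 (x * y) - 𝓇 (x * y) = 𝓁 x * (𝓁 y - 𝓇 y) + 𝓇 y * (𝓁 x - 𝓇 x) := by
      rw [map_mul, rightMul_mul, mul_sub, mul_sub, (commute_leftMul_rightMul k x y).eq,
        sub_add_sub_cancel]
    rw [leibniz, add_smul, mul_smul, mul_smul]
    exact Submodule.add_mem _ (Submodule.smul_mem _ _ hy) (Submodule.smul_mem _ _ hx)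

lemma exact_d₁ (ha : Algebra.adjoin k (Set.range e ∪ Set.range a) = ⊤) :
    Function.Exact (h.d₁ k) (fromCorner η (1 : A)) := by
  have mem_range (r : Envelope k A) :
      (r - 𝓇 (r • (1 : A))) • h.vertexGen k ∈ LinearMap.range (h.d₁ k) := by
    induction r using Envelope.induction with
    | mul x y =>
      rw [mul_smul, rightMul_smul, leftMul_smul, one_mul, rightMul_mul,
        (commute_leftMul_rightMul k _ _).eq, ← mul_sub, mul_smul]
      exact Submodule.smul_mem _ _ (h.sub_smul_vertexGen_mem_range ha x)
    | add r s hr hs =>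
      rw [add_smul, map_add, add_sub_add_comm, add_smul]
      exact Submodule.add_mem _ hr hs
  refine LinearMap.exact_iff.2 (le_antisymm (fun x hx ↦ ?_) ?_)
  · have hx' : (x : Envelope k A) • (1 : A) = 0 := hx
    simpa [hx', vertexGen, smul_cornerUnit] using mem_range x
  · rintro _ ⟨v, rfl⟩
    rw [LinearMap.mem_ker, d₁_apply, map_sum]
    refine Finset.sum_eq_zero fun j _ ↦ ?_
    rw [map_smul, map_smul, fromCorner_apply, sub_smul, vertexGen, cornerUnit,
      vertexUnit_smul_one h.toCompleteOrthogonalIdempotents, leftMul_smul, rightMul_smul,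
      mul_one, one_mul, sub_self, smul_zero]

end PreprojectiveFamily

end Differentials

section TrivSqZeroExt

variable {A C : Type*} {I J : Type*} [Fintype I] [Fintype J] [Ring A] {Q : DoubleQuiver I J}
  {e : I → A} {a : J → A} [AddCommGroup C] [Module A C] [Module Aᵐᵒᵖ C] [SMulCommClass A Aᵐᵒᵖ C]

lemma PreprojectiveFamily.trivSqZeroExt (h : PreprojectiveFamily Q e a) {c : J → C}
    (hsrc : ∀ j, e (Q.src j) • c j = c j) (htgt : ∀ j, MulOpposite.op (e (Q.tgt j)) • c j = c j)
    (hrel : ∑ j, (a (Q.rev j) • c j + MulOpposite.op (a (Q.rev j)) • c j) = 0) :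
    PreprojectiveFamily Q (fun i ↦ TrivSqZeroExt.inlHom A C (e i))
      fun j ↦ TrivSqZeroExt.inl (a j) + TrivSqZeroExt.inr (c j) where
  toCompleteOrthogonalIdempotents :=
    h.toCompleteOrthogonalIdempotents.map (TrivSqZeroExt.inlHom A C)
  src_mul j := by ext <;> simp [h.src_mul, hsrc]
  mul_tgt j := by ext <;> simp [h.mul_tgt, htgt]
  relation := by
    ext
    · simpa [TrivSqZeroExt.fst_sum] using h.relation
    · have swap : ∑ j, a j • c (Q.rev j) = ∑ j, a (Q.rev j) • c j := by
        rw [← Q.sum_rev]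
        simp only [Q.rev_rev _]
      simpa [TrivSqZeroExt.snd_sum, Finset.sum_add_distrib, swap] using hrel

end TrivSqZeroExt

section Derivation

variable {k A C : Type u} {I J : Type} [CommRing k] [Ring A]
  [Algebra k A] {Q : DoubleQuiver I J} {e : I → A} {a : J → A}
  [AddCommGroup C] [Module (Envelope k A) C]

local notation "𝓁" => leftMul k
local notation "𝓇" => rightMul k

lemma leftMul_src_smul {j : J} (he : OrthogonalIdempotents e) {m : C}
    (hm : arrowUnit k Q e j • m = m) : 𝓁 (e (Q.src j)) • m = m := by
  rw [← hm, ← mul_smul, arrowUnit, ← mul_assoc, ← map_mul, he.idem]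

lemma rightMul_tgt_smul {j : J} (he : OrthogonalIdempotents e) {m : C}
    (hm : arrowUnit k Q e j • m = m) : 𝓇 (e (Q.tgt j)) • m = m := by
  rw [← hm, ← mul_smul, arrowUnit, (commute_leftMul_rightMul k _ _).eq, ← mul_assoc,
    ← rightMul_mul, he.idem]

variable [Fintype I] [Fintype J] [Module k C] [IsScalarTower k (Envelope k A) C]

lemma IsPreprojectiveAlgebra.exists_derivation (h : IsPreprojectiveAlgebra k Q e a) {c : J → C}
    (hc : ∀ j, arrowUnit k Q e j • c j = c j)
    (hrel : ∑ j, (𝓁 (a (Q.rev j)) + 𝓇 (a (Q.rev j))) • c j = 0) :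
    ∃ D : A →ₗ[k] C, (∀ x y, D (x * y) = 𝓁 x • D y + 𝓇 y • D x) ∧ (∀ i, D (e i) = 0) ∧
      ∀ j, D (a j) = c j := by
  let : Module A C := Module.compHom C (𝓁 : A →ₐ[k] Envelope k A).toRingHom
  let : Module Aᵐᵒᵖ C := Module.compHom C (opHom k (A := A)).toRingHom
  have left_smul (x : A) (m : C) : x • m = 𝓁 x • m := rfl
  have right_smul (x : A) (m : C) : MulOpposite.op x • m = 𝓇 x • m := rfl
  have : SMulCommClass A Aᵐᵒᵖ C := ⟨fun x y m ↦ by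
    rw [← MulOpposite.op_unop y]
    simp only [left_smul, right_smul, ← mul_smul, (commute_leftMul_rightMul k _ _).eq]⟩
  have : IsScalarTower k A C := ⟨fun t x m ↦ by
    rw [left_smul, left_smul, map_smul, smul_assoc]⟩
  have : IsScalarTower k Aᵐᵒᵖ C := ⟨fun t x m ↦ by
    rw [← MulOpposite.op_unop x, ← MulOpposite.op_smul, right_smul, right_smul, map_smul,
      smul_assoc]⟩
  have he := h.toOrthogonalIdempotents
  obtain ⟨φ, hφe, hφa⟩ := h.exists_lift <| h.trivSqZeroExt (c := c)
    (fun j ↦ leftMul_src_smul he (hc j)) (fun j ↦ rightMul_tgt_smul he (hc j))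
    (by simpa only [left_smul, right_smul, add_smul] using hrel)
  have fst_φ : (TrivSqZeroExt.fstHom k A C).comp φ = AlgHom.id k A := by
    refine AlgHom.ext_of_adjoin_eq_top h.adjoin_eq_top ?_
    rintro _ (⟨i, rfl⟩ | ⟨j, rfl⟩) <;> simp [hφe, hφa]
  have fst_φ' (x : A) : (φ x).fst = x := DFunLike.congr_fun fst_φ x
  refine ⟨(TrivSqZeroExt.sndHom A C).restrictScalars k ∘ₗ φ.toLinearMap, fun x y ↦ ?_,
    fun i ↦ ?_, fun j ↦ ?_⟩
  · simp [fst_φ', left_smul, right_smul]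
  · simp [hφe]
  · simp [hφa]

end Derivation

section ExactTwo

variable {k A C : Type u} {I J : Type} [Fintype I] [Fintype J] [CommRing k] [Ring A]
  [Algebra k A] {Q : DoubleQuiver I J} {e : I → A} {a : J → A}

local notation "𝓁" => leftMul k
local notation "𝓇" => rightMul k
local notation "η" => vertexUnit k e

/-- The universal property of the bimodule of noncommutative differentials, the kernel of the
multiplication `x ⊗ yᵒᵖ ↦ x * y`, which is generated by the elements `𝓁 y - 𝓇 y`. -/
lemma exists_extend_derivation [AddCommGroup C] [Module k C] [Module (Envelope k A) C]
    [IsScalarTower k (Envelope k A) C] (D : A →ₗ[k] C)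
    (hD : ∀ x y, D (x * y) = 𝓁 x • D y + 𝓇 y • D x) :
    ∃ S : Envelope k A →ₗ[k] C, ∀ r y, S (r * (𝓁 y - 𝓇 y)) = r • D y := by
  let S : Envelope k A →ₗ[k] C := Envelope.lift <|
    LinearMap.mk₂ k (fun x y ↦ 𝓇 y • D x)
      (fun x y z ↦ by rw [map_add, smul_add])
      (fun t x y ↦ by rw [map_smul, smul_comm])
      (fun x y z ↦ by rw [map_add, add_smul])
      (fun t x y ↦ by rw [map_smul, smul_assoc])
  have S_mul (x y : A) : S (𝓁 x * 𝓇 y) = 𝓇 y • D x := Envelope.lift_mul _ _ _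
  refine ⟨S, fun r y ↦ ?_⟩
  induction r using Envelope.induction with
  | mul x z =>
    have expand : 𝓁 x * 𝓇 z * (𝓁 y - 𝓇 y) = 𝓁 (x * y) * 𝓇 z - 𝓁 x * 𝓇 (y * z) := by
      rw [mul_sub, mul_assoc, ← (commute_leftMul_rightMul k y z).eq, ← mul_assoc, map_mul,
        rightMul_mul, mul_assoc (𝓁 x), mul_assoc (𝓁 x)]
    rw [expand, map_sub, S_mul, S_mul, hD, rightMul_mul, smul_add, mul_smul, add_sub_cancel_right,
      ← mul_smul, (commute_leftMul_rightMul k x z).eq]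
  | add r s hr hs => rw [add_mul, map_add, hr, hs, add_smul]

namespace PreprojectiveFamily

variable (h : PreprojectiveFamily Q e a)
include h

lemma surjective_fromCorner_one :
    Function.Surjective (fromCorner η (1 : A)) := fun m ↦
  ⟨𝓁 m • h.vertexGen k, by
    rw [map_smul, vertexGen, cornerUnit, fromCorner_apply,
      vertexUnit_smul_one h.toCompleteOrthogonalIdempotents, leftMul_smul, mul_one]⟩

lemma d₁_d₂ (v : corner η) : h.d₁ k (h.d₂ k v) = 0 := by
  rw [d₂, fromCorner_apply, map_smul, d₁_apply]
  convert smul_zero _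
  refine Subtype.ext ?_
  have cancel (j : J) : (𝓁 (a (Q.rev j)) + 𝓇 (a (Q.rev j))) * arrowUnit k Q e j *
      ((𝓁 (a j) - 𝓇 (a j)) * η) =
      (𝓁 (a (Q.rev j)) + 𝓇 (a (Q.rev j))) * (𝓁 (a j) - 𝓇 (a j)) * η := by
    rw [mul_assoc, h.arrowUnit_mul_sub, mul_assoc]
  simpa [vertexGen, arrowGen, cornerUnit, cancel, ← Finset.sum_mul] using
    congrArg (· * η) (h.sum_rev_mul_sub k)

variable (k) in
lemma d₂_vertexGen :
    h.d₂ k (h.vertexGen k) = fun j ↦ (𝓁 (a (Q.rev j)) + 𝓇 (a (Q.rev j))) • h.arrowGen k j := by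
  refine funext fun j ↦ Subtype.ext ?_
  have idem := isIdempotentElem_arrowUnit (k := k) (Q := Q) h.toOrthogonalIdempotents j
  change η * ((𝓁 (a (Q.rev j)) + 𝓇 (a (Q.rev j))) * arrowUnit k Q e j) = _
  rw [← mul_assoc, h.vertexUnit_mul_rev, mul_assoc, idem.eq]
  rfl

end PreprojectiveFamily

lemma IsPreprojectiveAlgebra.exact_d₂ (h : IsPreprojectiveAlgebra k Q e a) :
    Function.Exact (h.d₂ k) (h.d₁ k) := by
  classical
  let π := (LinearMap.range (h.d₂ k)).mkQ
  let c (j : J) := π (Pi.single j (h.arrowGen k j))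
  have sum_smul (r : J → Envelope k A) :
      ∑ j, r j • c j = π fun j ↦ r j • h.arrowGen k j := by
    simp only [c, ← map_smul, ← map_sum, ← Pi.single_smul]
    exact congrArg π (Finset.univ_sum_single _)
  obtain ⟨D, leibniz, D_vertex, D_arrow⟩ := h.exists_derivation (c := c)
    (fun j ↦ by
      rw [← map_smul, ← Pi.single_smul]
      exact congrArg _ (congrArg _ (smul_cornerUnit _ (h.arrowGen k j))))
    (by
      rw [sum_smul, ← h.d₂_vertexGen k, ← LinearMap.mem_ker, Submodule.ker_mkQ]
      exact LinearMap.mem_range_self _ _)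
  obtain ⟨S, hS⟩ := exists_extend_derivation D leibniz
  have S_mul_vertexUnit (r : Envelope k A) : S (r * η) = S r := by
    rw [← sub_eq_zero, ← map_sub, ← mul_sub_one,
      vertexUnit_sub_one h.toCompleteOrthogonalIdempotents, Finset.mul_sum, map_sum]
    exact Finset.sum_eq_zero fun i _ ↦ by rw [← mul_assoc, hS, D_vertex, smul_zero]
  have S_d₁ (v : ∀ j, corner (arrowUnit k Q e j)) : S (h.d₁ k v : corner η) = π v := by
    have expand : (h.d₁ k v : Envelope k A) =
        (∑ j, (v j : Envelope k A) * (𝓁 (a j) - 𝓇 (a j))) * η := by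
      simp [h.d₁_apply, Finset.sum_mul, PreprojectiveFamily.vertexGen, cornerUnit, mul_assoc]
    rw [expand, S_mul_vertexUnit, map_sum]
    simp only [hS, D_arrow, sum_smul, PreprojectiveFamily.arrowGen, smul_cornerUnit]
  refine LinearMap.exact_iff.2 (le_antisymm (fun v hv ↦ ?_) ?_)
  · rw [← (LinearMap.range (h.d₂ k)).ker_mkQ]
    exact (S_d₁ v).symm.trans (by rw [LinearMap.mem_ker.1 hv, ZeroMemClass.coe_zero, map_zero])
  · rintro _ ⟨v, rfl⟩
    exact h.d₁_d₂ v

end ExactTwo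

section Frobenius

variable {k A : Type u} [CommRing k] [Ring A] [Algebra k A]

local notation "𝓁" => leftMul k
local notation "𝓇" => rightMul k

/-- The map `x ⊗ yᵒᵖ ↦ τ x • y`. -/
noncomputable def contractLeft (τ : A →ₗ[k] k) : Envelope k A →ₗ[k] A :=
  Envelope.lift (LinearMap.lsmul k A ∘ₗ τ)

/-- The map `x ⊗ yᵒᵖ ↦ τ y • x`. -/
noncomputable def contractRight (τ : A →ₗ[k] k) : Envelope k A →ₗ[k] A :=
  Envelope.lift (LinearMap.lsmul k A ∘ₗ τ).flip

variable (τ : A →ₗ[k] k)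

lemma contractLeft_mul (x y : A) : contractLeft τ (𝓁 x * 𝓇 y) = τ x • y :=
  Envelope.lift_mul _ _ _

lemma contractRight_mul (x y : A) : contractRight τ (𝓁 x * 𝓇 y) = τ y • x :=
  Envelope.lift_mul _ _ _

variable (k A) in
/-- The exchange `x ⊗ yᵒᵖ ↦ y ⊗ xᵒᵖ` of the two factors. -/
noncomputable def swap : Envelope k A →ₗ[k] Envelope k A :=
  Envelope.lift ((LinearMap.mul k (Envelope k A)).compl₁₂ (𝓇) (𝓁 : A →ₐ[k] _).toLinearMap)

lemma swap_mul (x y : A) : swap k A (𝓁 x * 𝓇 y) = 𝓁 y * 𝓇 x :=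
  (Envelope.lift_mul _ _ _).trans (commute_leftMul_rightMul k y x).eq.symm

lemma contractLeft_mul_rightMul (r : Envelope k A) (x : A) :
    contractLeft τ (r * 𝓇 x) = x * contractLeft τ r := by
  induction r using Envelope.induction with
  | mul y z =>
    rw [mul_assoc, ← rightMul_mul, contractLeft_mul, contractLeft_mul, mul_smul_comm]
  | add r s hr hs => rw [add_mul, map_add, hr, hs, map_add, mul_add]

lemma contractRight_mul_leftMul (r : Envelope k A) (x : A) :
    contractRight τ (r * 𝓁 x) = contractRight τ r * x := by
  induction r using Envelope.induction with
  | mul y z =>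
    rw [mul_assoc, ← (commute_leftMul_rightMul k x z).eq, ← mul_assoc, ← map_mul,
      contractRight_mul, contractRight_mul, smul_mul_assoc]
  | add r s hr hs => rw [add_mul, map_add, hr, hs, map_add, add_mul]

lemma contractLeft_rightMul_mul (r : Envelope k A) (x : A) :
    contractLeft τ (𝓇 x * r) = contractLeft τ r * x := by
  induction r using Envelope.induction with
  | mul y z =>
    rw [← mul_assoc, ← (commute_leftMul_rightMul k _ _).eq, mul_assoc, ← rightMul_mul,
      contractLeft_mul, contractLeft_mul, smul_mul_assoc]
  | add r s hr hs => rw [mul_add, map_add, hr, hs, map_add, add_mul]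

lemma swap_mul_leftMul (r : Envelope k A) (x : A) :
    swap k A (r * 𝓁 x) = 𝓇 x * swap k A r := by
  induction r using Envelope.induction with
  | mul y z =>
    rw [mul_assoc, ← (commute_leftMul_rightMul k x z).eq, ← mul_assoc, ← map_mul, swap_mul,
      swap_mul, rightMul_mul, ← mul_assoc, (commute_leftMul_rightMul k _ _).eq, mul_assoc]
  | add r s hr hs => rw [add_mul, map_add, hr, hs, map_add, mul_add]

lemma swap_mul_rightMul (r : Envelope k A) (x : A) :
    swap k A (r * 𝓇 x) = 𝓁 x * swap k A r := by
  induction r using Envelope.induction with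
  | mul y z => rw [mul_assoc, ← rightMul_mul, swap_mul, swap_mul, map_mul, mul_assoc]
  | add r s hr hs => rw [add_mul, map_add, hr, hs, map_add, mul_add]

lemma apply_mul_contractLeft (r : Envelope k A) (x y : A) :
    τ (y * contractLeft τ (𝓁 x * r)) = τ (x * contractLeft τ (𝓁 y * swap k A r)) := by
  induction r using Envelope.induction with
  | mul u v =>
    rw [swap_mul, ← mul_assoc, ← mul_assoc, ← map_mul, ← map_mul, contractLeft_mul,
      contractLeft_mul, mul_smul_comm, mul_smul_comm, map_smul, map_smul, smul_eq_mul,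
      smul_eq_mul, mul_comm]
  | add r s hr hs => simp only [mul_add, map_add, hr, hs]

/-- `ω` is the copairing dual to the symmetric Frobenius form `(x, y) ↦ τ (x * y)`. -/
structure IsFrobeniusPair (τ : A →ₗ[k] k) (ω : Envelope k A) : Prop where
  isBalanced : IsBalanced ω
  swap_eq : swap k A ω = ω
  contractLeft_eq : contractLeft τ ω = 1

namespace IsFrobeniusPair

variable {τ} {ω : Envelope k A} (h : IsFrobeniusPair τ ω)
include h

lemma contractLeft_mul_leftMul (x : A) : contractLeft τ (ω * 𝓁 x) = x := by
  rw [h.isBalanced x, contractLeft_mul_rightMul, h.contractLeft_eq, mul_one]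

/-- A balanced element is a multiple of the copairing: in terms of `ω = ∑ u ⊗ vᵒᵖ`, both sides
are `∑ 𝓁 (contractRight τ (z * 𝓁 u)) * 𝓇 v`. -/
lemma eq_leftMul_mul {z : Envelope k A} (hz : IsBalanced z) :
    z = 𝓁 (contractRight τ z) * ω := by
  obtain ⟨S, hS⟩ := ω.exists_eq_sum
  have expand (r : Envelope k A) :
      r = ∑ p ∈ S, 𝓁 (contractRight τ (r * 𝓇 p.1)) * 𝓇 p.2.unop := by
    induction r using Envelope.induction with
    | mul x y =>
      conv_lhs => rw [← h.contractLeft_mul_leftMul y, hS]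
      simp only [Finset.sum_mul, map_sum, Finset.mul_sum]
      refine Finset.sum_congr rfl fun p _ ↦ ?_
      rw [mul_assoc, ← (commute_leftMul_rightMul k _ _).eq, ← mul_assoc, ← map_mul,
        contractLeft_mul, mul_assoc (𝓁 x), ← rightMul_mul, contractRight_mul, map_smul, map_smul,
        mul_smul_comm, smul_mul_assoc]
    | add r s hr hs =>
      simp only [add_mul, map_add, Finset.sum_add_distrib, ← hr, ← hs]
  calc
    z = ∑ p ∈ S, 𝓁 (contractRight τ (z * 𝓇 p.1)) * 𝓇 p.2.unop := expand z
    _ = ∑ p ∈ S, 𝓁 (contractRight τ z) * (𝓁 p.1 * 𝓇 p.2.unop) := by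
      simp only [← hz _, contractRight_mul_leftMul, map_mul, mul_assoc]
    _ = 𝓁 (contractRight τ z) * ω := by rw [hS, Finset.mul_sum]

lemma contractLeft_leftMul_mul (x : A) : contractLeft τ (𝓁 x * ω) = x := by
  have balanced_left : 𝓁 x * ω = 𝓇 x * ω := by
    conv_lhs => rw [← h.swap_eq, ← swap_mul_rightMul, ← h.isBalanced, swap_mul_leftMul, h.swap_eq]
  rw [balanced_left, contractLeft_rightMul_mul, h.contractLeft_eq, one_mul]

lemma apply_mul_comm (x y : A) : τ (x * y) = τ (y * x) := by
  have symm := apply_mul_contractLeft τ ω x y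
  rw [h.swap_eq, h.contractLeft_leftMul_mul, h.contractLeft_leftMul_mul] at symm
  exact symm.symm

end IsFrobeniusPair

end Frobenius

section Hochschild

variable {k A : Type u} {I J : Type} [Fintype I] [Fintype J] [CommRing k] [Ring A]
  [Algebra k A] {Q : DoubleQuiver I J} {e : I → A} {a : J → A}

local notation "𝓁" => leftMul k
local notation "𝓇" => rightMul k
local notation "η" => vertexUnit k e

lemma PreprojectiveFamily.coe_d₂_apply (h : PreprojectiveFamily Q e a) (v : corner η) (j : J) :
    (h.d₂ k v j : Envelope k A) = v * (𝓁 (a (Q.rev j)) + 𝓇 (a (Q.rev j))) := by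
  change (v : Envelope k A) * ((𝓁 (a (Q.rev j)) + 𝓇 (a (Q.rev j))) * arrowUnit k Q e j) = _
  rw [← h.vertexUnit_mul_rev, ← mul_assoc, v.2]

variable (k) in
lemma sub_eq_add_of_charTwo [CharP k 2] {M : Type*} [AddCommGroup M] [Module k M] (x y : M) :
    x - y = x + y := by
  rw [sub_eq_add_neg, ← neg_one_smul k, CharTwo.neg_eq, one_smul]

namespace IsPreprojectiveAlgebra

variable (h : IsPreprojectiveAlgebra k Q e a)
include h

lemma d₂_eq_zero_iff [CharP k 2] (v : corner η) :
    h.d₂ k v = 0 ↔ IsBalanced (v : Envelope k A) := by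
  have component (j : J) : (v : Envelope k A) * 𝓁 (a (Q.rev j)) = v * 𝓇 (a (Q.rev j)) ↔
      h.d₂ k v j = 0 := by
    rw [← sub_eq_zero, sub_eq_add_of_charTwo k, ← mul_add, ← h.coe_d₂_apply, Subtype.ext_iff]
    rfl
  refine ⟨fun hv ↦ .of_adjoin_eq_top h.adjoin_eq_top ?_,
    fun hv ↦ funext fun j ↦ (component j).1 (hv _)⟩
  rintro _ (⟨i, rfl⟩ | ⟨j, rfl⟩)
  · have he := h.toOrthogonalIdempotents
    rw [← v.2, mul_assoc, mul_assoc, vertexUnit_mul_leftMul he (he.idem i),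
      vertexUnit_mul_rightMul he (he.idem i)]
  · simpa only [Q.rev_rev _] using (component (Q.rev j)).2 (congrFun hv _)

end IsPreprojectiveAlgebra

/-- Multiplication by `ω`, as a differential into the free bimodule on the relations. -/
noncomputable def PreprojectiveFamily.d₃ (h : PreprojectiveFamily Q e a) (ω : Envelope k A) :
    Envelope k A →ₗ[Envelope k A] corner η :=
  LinearMap.toSpanSingleton _ _ (ω • h.vertexGen k)

lemma IsPreprojectiveAlgebra.exact_d₃ [CharP k 2] (h : IsPreprojectiveAlgebra k Q e a)
    {τ : A →ₗ[k] k} {ω : Envelope k A} (hω : IsFrobeniusPair τ ω) :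
    Function.Exact (h.d₃ ω) (h.d₂ k) := by
  have coe_d₃ (r : Envelope k A) : (h.d₃ ω r : Envelope k A) = r * ω :=
    congrArg (r * ·) (hω.isBalanced.mul_vertexUnit h.toCompleteOrthogonalIdempotents)
  intro v
  rw [h.d₂_eq_zero_iff]
  constructor
  · intro hv
    exact ⟨_, Subtype.ext ((coe_d₃ _).trans (hω.eq_leftMul_mul hv).symm)⟩
  · rintro ⟨r, rfl⟩ x
    rw [coe_d₃, mul_assoc, hω.isBalanced, mul_assoc]

variable (k Q e a) in
/-- The differential `Hom(P₁, A) → Hom(P₂, A)` of the bimodule resolution, in terms of the images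
of the generators. It differentiates the relation `∑ aⱼ a_{rev j}` in the direction of a family `n`
of elements of `A`, of which only the component of `n j` parallel to the arrow `j` matters. -/
noncomputable def coboundary : (J → A) →ₗ[k] A :=
  ∑ j, Algebra.lsmul k k A ((𝓁 (a (Q.rev j)) + 𝓇 (a (Q.rev j))) * arrowUnit k Q e j) ∘ₗ
    LinearMap.proj j

omit [Fintype I] in
lemma coboundary_apply (n : J → A) :
    coboundary k Q e a n = ∑ j, (𝓁 (a (Q.rev j)) + 𝓇 (a (Q.rev j))) • arrowUnit k Q e j • n j := by
  simp only [coboundary, LinearMap.sum_apply, LinearMap.comp_apply, LinearMap.proj_apply,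
    Algebra.lsmul_coe, mul_smul]

variable (k e) in
/-- The kernel of the differential `Hom(P₂, A) → Hom(P₃, A)` of the bimodule resolution, in terms
of the image of the generator. -/
noncomputable def cocycles (ω : Envelope k A) : Submodule k A :=
  LinearMap.ker (Algebra.lsmul k k A (η - 1)) ⊓ LinearMap.ker (Algebra.lsmul k k A ω)

lemma mem_cocycles {ω : Envelope k A} {m : A} : m ∈ cocycles k e ω ↔ η • m = m ∧ ω • m = 0 := by
  simp only [cocycles, Submodule.mem_inf, LinearMap.mem_ker, Algebra.lsmul_coe, sub_smul, one_smul,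
    sub_eq_zero]

namespace PreprojectiveFamily

variable (h : PreprojectiveFamily Q e a)

variable (k) in
/-- A bimodule homomorphism from the free bimodule on the vertices, as the image of the
generator. -/
noncomputable def evalVertexGen : (corner η →ₗ[Envelope k A] A) →ₗ[k] A :=
  LinearMap.applyₗ' k (h.vertexGen k)

lemma smul_evalVertexGen (f : corner η →ₗ[Envelope k A] A) (v : corner η) :
    (v : Envelope k A) • h.evalVertexGen k f = f v :=
  (map_cornerUnit (isIdempotentElem_vertexUnit h.toOrthogonalIdempotents) f v).symm

lemma injective_evalVertexGen : Function.Injective (h.evalVertexGen k) := fun f g hfg ↦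
  LinearMap.ext fun v ↦ by rw [← h.smul_evalVertexGen, hfg, h.smul_evalVertexGen]

lemma vertexUnit_smul_evalVertexGen (f : corner η →ₗ[Envelope k A] A) :
    η • h.evalVertexGen k f = h.evalVertexGen k f :=
  h.smul_evalVertexGen f (h.vertexGen k)

lemma map_ker_lcomp_d₃ (ω : Envelope k A) :
    (LinearMap.ker ((h.d₃ ω).lcomp k A)).map (h.evalVertexGen k) = cocycles k e ω := by
  have mem_ker (f : corner η →ₗ[Envelope k A] A) :
      f ∈ LinearMap.ker ((h.d₃ ω).lcomp k A) ↔ ω • h.evalVertexGen k f = 0 := by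
    rw [LinearMap.mem_ker]
    refine ⟨fun hf ↦ ?_, fun hf ↦ LinearMap.ext fun r ↦ ?_⟩
    · simpa [d₃, evalVertexGen] using congrArg (· 1) hf
    · simpa [d₃, evalVertexGen] using congrArg (r • ·) hf
  ext m
  rw [mem_cocycles]
  constructor
  · rintro ⟨f, hf, rfl⟩
    exact ⟨h.vertexUnit_smul_evalVertexGen f, (mem_ker f).1 hf⟩
  · rintro ⟨hη, hω⟩
    have eval : h.evalVertexGen k (fromCorner η m) = m := hη
    exact ⟨fromCorner η m, (mem_ker _).2 (eval.symm ▸ hω), eval⟩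

lemma evalVertexGen_lcomp_d₂ [DecidableEq J]
    (g : (∀ j, corner (arrowUnit k Q e j)) →ₗ[Envelope k A] A) :
    h.evalVertexGen k (g ∘ₗ h.d₂ k) =
      coboundary k Q e a fun j ↦ g (Pi.single j (h.arrowGen k j)) := by
  have arrowUnit_smul (j : J) : arrowUnit k Q e j • g (Pi.single j (h.arrowGen k j)) =
      g (Pi.single j (h.arrowGen k j)) := by
    rw [← map_smul, ← Pi.single_smul]
    exact congrArg (g <| Pi.single j ·) (smul_cornerUnit _ (h.arrowGen k j))
  have expand (v : ∀ j, corner (arrowUnit k Q e j)) : g v = ∑ j, g (Pi.single j (v j)) := by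
    rw [← map_sum, Finset.univ_sum_single]
  simp only [coboundary_apply, arrowUnit_smul, ← map_smul, ← Pi.single_smul]
  exact (congrArg g (h.d₂_vertexGen k)).trans (expand _)

lemma exists_apply_single_arrowGen [DecidableEq J] (n : J → A) :
    ∃ g : (∀ j, corner (arrowUnit k Q e j)) →ₗ[Envelope k A] A,
      ∀ j, g (Pi.single j (h.arrowGen k j)) = arrowUnit k Q e j • n j := by
  refine ⟨∑ j, fromCorner _ (n j) ∘ₗ LinearMap.proj j, fun j ↦ ?_⟩
  rw [LinearMap.sum_apply, Finset.sum_eq_single j (fun i _ hi ↦ ?_) (by simp)]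
  · simp [fromCorner_apply, arrowGen, cornerUnit]
  · simp [Pi.single_eq_of_ne hi]

lemma map_range_lcomp_d₂ :
    (LinearMap.range ((h.d₂ k).lcomp k A)).map (h.evalVertexGen k) =
      LinearMap.range (coboundary k Q e a) := by
  classical
  ext m
  constructor
  · rintro ⟨_, ⟨g, rfl⟩, rfl⟩
    exact ⟨_, (h.evalVertexGen_lcomp_d₂ g).symm⟩
  · rintro ⟨n, rfl⟩
    obtain ⟨g, hg⟩ := h.exists_apply_single_arrowGen (k := k) n
    have idem (j : J) := isIdempotentElem_arrowUnit (k := k) (Q := Q) h.toOrthogonalIdempotents j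
    refine ⟨_, ⟨g, rfl⟩, (h.evalVertexGen_lcomp_d₂ g).trans ?_⟩
    simp only [coboundary_apply, hg, ← mul_smul, (idem _).eq]

end PreprojectiveFamily

omit [Fintype I] in
lemma apply_coboundary_mul_eq_zero [CharP k 2] {τ : A →ₗ[k] k}
    (hτ : ∀ x y, τ (x * y) = τ (y * x)) {y : A} (hy : ∀ x, Commute x y) (n : J → A) :
    τ (coboundary k Q e a n * y) = 0 := by
  rw [coboundary_apply, Finset.sum_mul, map_sum]
  refine Finset.sum_eq_zero fun j _ ↦ ?_
  rw [add_smul, leftMul_smul, rightMul_smul, add_mul, map_add, mul_assoc, hτ, mul_assoc, mul_assoc,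
    (hy _).eq, CharTwo.add_self_eq_zero]

/-- The Hochschild cohomology over `A ⊗[k] Aᵐᵒᵖ` in terms of the wrapper `Envelope k A`. -/
noncomputable def HH2.envelopeEquiv (k A : Type) [Field k] [Ring A] [Algebra k A] :
    HH2 k A ≃ₗ[k] ((Ext k (ModuleCat (Envelope k A)) 2).obj
      (Opposite.op (ModuleCat.of (Envelope k A) A))).obj (ModuleCat.of (Envelope k A) A) :=
  LinearEquiv.refl k (HH2 k A)

/-- `HH²` as the cocycles modulo the coboundaries in the truncated bimodule resolution given by
`d₁`, `d₂` and `d₃`. -/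
noncomputable def hochschildTwoEquiv {k A : Type} [Field k] [CharP k 2] [Ring A] [Algebra k A]
    {Q : DoubleQuiver I J} {e : I → A} {a : J → A} (h : IsPreprojectiveAlgebra k Q e a)
    {τ : A →ₗ[k] k} {ω : Envelope k A} (hω : IsFrobeniusPair τ ω) :
    HH2 k A ≃ₗ[k] cocycles k e ω ⧸
      (LinearMap.range (coboundary k Q e a)).submoduleOf (cocycles k e ω) :=
  have he := h.toOrthogonalIdempotents
  have := corner_projective (isIdempotentElem_vertexUnit (k := k) he)
  have := pi_corner_projective (isIdempotentElem_arrowUnit (k := k) (Q := Q) he)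
  HH2.envelopeEquiv k A ≪≫ₗ
    extTwoEquiv k A h.surjective_fromCorner_one (h.exact_d₁ h.adjoin_eq_top) h.exact_d₂
      (h.exact_d₃ hω) ≪≫ₗ
    subquotientEquiv _ h.injective_evalVertexGen (h.map_ker_lcomp_d₃ ω) h.map_range_lcomp_d₂

end Hochschild

section Path

variable {I A : Type*} [Ring A] {e : I → A}

/-- `x` is a linear combination of paths from `s` to `t`, that is, `x ∈ eₛ A eₜ`. -/
def IsPath (e : I → A) (s t : I) (x : A) : Prop := e s * x = x ∧ x * e t = x

namespace IsPath

variable {s t s' t' : I} {x y : A}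

lemma mul (hx : IsPath e s t x) (hy : IsPath e t s' y) : IsPath e s s' (x * y) :=
  ⟨by rw [← mul_assoc, hx.1], by rw [mul_assoc, hy.2]⟩

lemma mul_eq_zero (he : OrthogonalIdempotents e) (hx : IsPath e s t x) (hy : IsPath e s' t' y)
    (hne : t ≠ s') : x * y = 0 := by
  rw [← hx.2, ← hy.1, mul_assoc, ← mul_assoc (e t), he.ortho hne, zero_mul, mul_zero]

lemma vertex (he : OrthogonalIdempotents e) (i : I) : IsPath e i i (e i) :=
  ⟨he.idem i, he.idem i⟩

lemma mul_vertex [DecidableEq I] (he : OrthogonalIdempotents e) (hx : IsPath e s t x) (i : I) :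
    x * e i = if i = t then x else 0 := by
  split_ifs with hi
  · rw [hi, hx.2]
  · exact hx.mul_eq_zero he (vertex he i) (Ne.symm hi)

lemma vertex_mul [DecidableEq I] (he : OrthogonalIdempotents e) (hx : IsPath e s t x) (i : I) :
    e i * x = if i = s then x else 0 := by
  split_ifs with hi
  · rw [hi, hx.1]
  · exact (vertex he i).mul_eq_zero he hx hi

end IsPath

end Path

section Star

/-- The double of the star: its vertices are the centre `none` and a leaf `some i` for each `i`,
its arrows are `inl i : some i → none` and `inr i : none → some i`. -/
def starQuiver (ι : Type*) : DoubleQuiver (Option ι) (ι ⊕ ι) where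
  src := Sum.elim some fun _ ↦ none
  tgt := Sum.elim (fun _ ↦ none) some
  rev := Sum.swap
  rev_rev := Sum.swap_swap
  src_rev := by rintro (i | i) <;> rfl

variable {A : Type*} [Ring A]

/-- The path from the centre to the leaf `i` and back. -/
def loop (a : Fin 3 ⊕ Fin 3 → A) (i : Fin 3) : A := a (.inr i) * a (.inl i)

/-- The longest path from the leaf `i` to the centre. -/
def pathIn (a : Fin 3 ⊕ Fin 3 → A) (i : Fin 3) : A := a (.inl i) * loop a (i + 1)

/-- The longest path from the centre to the leaf `i`. -/
def pathOut (a : Fin 3 ⊕ Fin 3 → A) (i : Fin 3) : A := loop a (i + 1) * a (.inr i)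

/-- The longest path from the leaf `i` to itself, which spans a socle. -/
def leafSocle (a : Fin 3 ⊕ Fin 3 → A) (i : Fin 3) : A := pathIn a i * a (.inr i)

/-- The longest path from the centre to itself, which spans a socle. -/
def centreSocle (a : Fin 3 ⊕ Fin 3 → A) : A := loop a 0 * loop a 1

variable {e : Option (Fin 3) → A} {a : Fin 3 ⊕ Fin 3 → A}

namespace PreprojectiveFamily

local notation "𝓍" => loop a
local notation "𝓎" => pathIn a
local notation "𝓏" => pathOut a
local notation "𝓈" => leafSocle a
local notation "𝓌" => centreSocle a
local notation:max "𝒂" i:max => a (Sum.inl i)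
local notation:max "𝒃" i:max => a (Sum.inr i)

variable (h : PreprojectiveFamily (starQuiver (Fin 3)) e a)
include h

section IsPath

lemma isPath_in (i : Fin 3) : IsPath e (some i) none (𝒂 i) :=
  ⟨h.src_mul (.inl i), h.mul_tgt (.inl i)⟩

lemma isPath_out (i : Fin 3) : IsPath e none (some i) (𝒃 i) :=
  ⟨h.src_mul (.inr i), h.mul_tgt (.inr i)⟩

lemma isPath_loop (i : Fin 3) : IsPath e none none (𝓍 i) := (h.isPath_out i).mul (h.isPath_in i)

lemma isPath_pathIn (i : Fin 3) : IsPath e (some i) none (𝓎 i) :=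
  (h.isPath_in i).mul (h.isPath_loop _)

lemma isPath_pathOut (i : Fin 3) : IsPath e none (some i) (𝓏 i) :=
  (h.isPath_loop _).mul (h.isPath_out i)

lemma isPath_leafSocle (i : Fin 3) : IsPath e (some i) (some i) (𝓈 i) :=
  (h.isPath_pathIn i).mul (h.isPath_out i)

lemma isPath_centreSocle : IsPath e none none 𝓌 := (h.isPath_loop 0).mul (h.isPath_loop 1)

end IsPath

lemma centre_mul_leaf {i : Fin 3} {s t : Option (Fin 3)} {p q : A} (hp : IsPath e s none p)
    (hq : IsPath e (some i) t q) : p * q = 0 :=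
  hp.mul_eq_zero h.toOrthogonalIdempotents hq (Option.some_ne_none i).symm

lemma leaf_mul_centre {i : Fin 3} {s t : Option (Fin 3)} {p q : A} (hp : IsPath e s (some i) p)
    (hq : IsPath e none t q) : p * q = 0 :=
  hp.mul_eq_zero h.toOrthogonalIdempotents hq (Option.some_ne_none i)

lemma leaf_mul_leaf {i j : Fin 3} (hij : i ≠ j) {s t : Option (Fin 3)} {p q : A}
    (hp : IsPath e s (some i) p) (hq : IsPath e (some j) t q) : p * q = 0 :=
  hp.mul_eq_zero h.toOrthogonalIdempotents hq ((Option.some_injective _).ne hij)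

lemma out_mul_in (i j : Fin 3) : 𝒃 i * 𝒂 j = if i = j then 𝓍 i else 0 := by
  split_ifs with hij
  · rw [← hij, loop]
  · exact h.leaf_mul_leaf hij (h.isPath_out i) (h.isPath_in j)

lemma in_mul_out_self (i : Fin 3) : 𝒂 i * 𝒃 i = 0 := by
  have corner := congrArg (e (some i) * ·) h.relation
  have he := h.toOrthogonalIdempotents
  have zero_out (j : Fin 3) : e (some i) * 𝒃 j = 0 :=
    (IsPath.vertex he _).mul_eq_zero he (h.isPath_out j) (by simp)
  have zero_in (j : Fin 3) (hj : j ≠ i) : e (some i) * 𝒂 j = 0 :=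
    (IsPath.vertex he _).mul_eq_zero he (h.isPath_in j) (by simpa using hj.symm)
  simp only [starQuiver, Fintype.sum_sum_type, Sum.swap_inl, Sum.swap_inr, mul_add, Finset.mul_sum,
    ← mul_assoc, zero_out, zero_mul, Finset.sum_const_zero, add_zero, mul_zero] at corner
  rwa [Finset.sum_eq_single i (fun j _ hj ↦ by rw [zero_in j hj, zero_mul]) (by simp),
    (h.isPath_in i).1] at corner

lemma sum_loop : ∑ i, 𝓍 i = 0 := by
  have relation := h.relation
  simpa only [loop, starQuiver, Fintype.sum_sum_type, Sum.swap_inl, Sum.swap_inr, h.in_mul_out_self,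
    Finset.sum_const_zero, zero_add] using relation

lemma in_mul_loop_self (i : Fin 3) : 𝒂 i * 𝓍 i = 0 := by
  rw [loop, ← mul_assoc, h.in_mul_out_self, zero_mul]

lemma loop_mul_out_self (i : Fin 3) : 𝓍 i * 𝒃 i = 0 := by
  rw [loop, mul_assoc, h.in_mul_out_self, mul_zero]

lemma loop_mul_self (i : Fin 3) : 𝓍 i * 𝓍 i = 0 := by
  nth_rw 1 [loop]
  rw [mul_assoc, h.in_mul_loop_self, mul_zero]

variable [CharP A 2]

lemma loop_add_loop (i : Fin 3) : 𝓍 i + 𝓍 (i + 1) = 𝓍 (i + 2) := by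
  rw [← CharTwo.add_eq_zero, ← h.sum_loop, ← Equiv.sum_comp (Equiv.addLeft i), Fin.sum_univ_three]
  simp only [Equiv.coe_addLeft, add_zero]

lemma loop_succ_add_loop (i : Fin 3) : 𝓍 (i + 1) + 𝓍 (i + 2) = 𝓍 i := by
  rw [← h.loop_add_loop i, add_comm, add_assoc, CharTwo.add_self_eq_zero, add_zero]

lemma in_mul_loop {i j : Fin 3} (hij : i ≠ j) : 𝒂 i * 𝓍 j = 𝓎 i := by
  obtain rfl | rfl : j = i + 1 ∨ j = i + 2 := by lia
  · rfl
  · rw [← h.loop_add_loop, mul_add, h.in_mul_loop_self, zero_add, pathIn]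

lemma loop_mul_out {i j : Fin 3} (hij : i ≠ j) : 𝓍 j * 𝒃 i = 𝓏 i := by
  obtain rfl | rfl : j = i + 1 ∨ j = i + 2 := by lia
  · rfl
  · rw [← h.loop_add_loop, add_mul, h.loop_mul_out_self, zero_add, pathOut]

lemma out_mul_pathIn_eq {i j : Fin 3} (hij : i ≠ j) : 𝒃 i * 𝓎 i = 𝓏 j * 𝒂 j := by
  rw [← h.in_mul_loop hij, ← h.loop_mul_out hij.symm, ← mul_assoc, mul_assoc (𝓍 i), loop, loop]

lemma out_mul_pathIn_self (i : Fin 3) : 𝒃 i * 𝓎 i = 𝓌 := by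
  obtain ⟨j, hij, hj⟩ : ∃ j, i ≠ j ∧ 0 ≠ j := by decide +revert
  rw [h.out_mul_pathIn_eq hij, ← h.out_mul_pathIn_eq hj, pathIn, ← mul_assoc, ← loop,
    centreSocle, zero_add]

lemma out_mul_pathIn (i j : Fin 3) : 𝒃 i * 𝓎 j = if i = j then 𝓌 else 0 := by
  split_ifs with hij
  · rw [← hij, h.out_mul_pathIn_self]
  · exact h.leaf_mul_leaf hij (h.isPath_out i) (h.isPath_pathIn j)

lemma pathOut_mul_in (i j : Fin 3) : 𝓏 i * 𝒂 j = if i = j then 𝓌 else 0 := by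
  split_ifs with hij
  · rw [← hij, ← h.out_mul_pathIn_eq (i := i + 1) (by lia), h.out_mul_pathIn_self]
  · exact h.leaf_mul_leaf hij (h.isPath_pathOut i) (h.isPath_in j)

lemma loop_mul_loop {i j : Fin 3} (hij : i ≠ j) : 𝓍 i * 𝓍 j = 𝓌 := by
  rw [← h.out_mul_pathIn_self i, ← h.in_mul_loop hij, ← mul_assoc, loop]

lemma in_mul_centreSocle (i : Fin 3) : 𝒂 i * 𝓌 = 0 := by
  rw [← h.loop_mul_loop (i := i) (j := i + 1) (by lia), ← mul_assoc, h.in_mul_loop_self, zero_mul]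

lemma centreSocle_mul_out (i : Fin 3) : 𝓌 * 𝒃 i = 0 := by
  rw [← h.loop_mul_loop (i := i + 1) (j := i) (by lia), mul_assoc, h.loop_mul_out_self, mul_zero]

lemma pathIn_mul_loop (i j : Fin 3) : 𝓎 i * 𝓍 j = 0 := by
  obtain rfl | hij := eq_or_ne i j
  · rw [← h.in_mul_loop (j := i + 1) (by lia), mul_assoc, h.loop_mul_loop (by lia),
      h.in_mul_centreSocle]
  · rw [← h.in_mul_loop hij, mul_assoc, h.loop_mul_self, mul_zero]

lemma pathIn_mul_out (i j : Fin 3) : 𝓎 i * 𝒃 j = if i = j then 𝓈 i else 0 := by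
  split_ifs with hij
  · rw [← hij, leafSocle]
  · rw [← h.in_mul_loop hij, mul_assoc, h.loop_mul_out_self, mul_zero]

lemma in_mul_pathOut (i j : Fin 3) : 𝒂 i * 𝓏 j = if i = j then 𝓈 i else 0 := by
  split_ifs with hij
  · rw [← hij, leafSocle, pathIn, mul_assoc, pathOut]
  · rw [← h.loop_mul_out (Ne.symm hij), ← mul_assoc, h.in_mul_loop_self, zero_mul]

lemma leafSocle_mul_in (i j : Fin 3) : 𝓈 i * 𝒂 j = 0 := by
  obtain rfl | hij := eq_or_ne i j
  · rw [leafSocle, mul_assoc, ← loop, h.pathIn_mul_loop]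
  · exact h.leaf_mul_leaf hij (h.isPath_leafSocle i) (h.isPath_in j)

lemma out_mul_leafSocle (i j : Fin 3) : 𝒃 i * 𝓈 j = 0 := by
  obtain rfl | hij := eq_or_ne i j
  · rw [leafSocle, ← mul_assoc, h.out_mul_pathIn_self, h.centreSocle_mul_out]
  · exact h.leaf_mul_leaf hij (h.isPath_out i) (h.isPath_leafSocle j)

lemma loop_mul_centreSocle (i : Fin 3) : 𝓍 i * 𝓌 = 0 := by
  rw [loop, mul_assoc, h.in_mul_centreSocle, mul_zero]

lemma pathIn_mul_centreSocle (i : Fin 3) : 𝓎 i * 𝓌 = 0 := by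
  rw [pathIn, mul_assoc, h.loop_mul_centreSocle, mul_zero]

lemma centreSocle_mul_self : 𝓌 * 𝓌 = 0 := by
  nth_rw 1 [centreSocle]
  rw [mul_assoc, h.loop_mul_centreSocle, mul_zero]

lemma leafSocle_mul_leafSocle (i j : Fin 3) : 𝓈 i * 𝓈 j = 0 := by
  nth_rw 2 [leafSocle]
  rw [pathIn, ← mul_assoc, ← mul_assoc, h.leafSocle_mul_in, zero_mul, zero_mul]

end PreprojectiveFamily

end Star

section Copairing

variable {k A : Type u} [CommRing k] [Ring A] [Algebra k A]

local notation "𝓁" => leftMul k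
local notation "𝓇" => rightMul k
local notation:75 x:76 " ⊠ " y:76 => 𝓁 x * 𝓇 y

lemma tensor_mul_leftMul (x y r : A) : x ⊠ y * 𝓁 r = (x * r) ⊠ y := by
  rw [mul_assoc, ← (commute_leftMul_rightMul k _ _).eq, ← mul_assoc, map_mul]

lemma tensor_mul_rightMul (x y r : A) : x ⊠ y * 𝓇 r = x ⊠ (r * y) := by
  rw [mul_assoc, rightMul_mul]

lemma IsPath.tensor_mul_vertex {I : Type*} {e : I → A} (he : OrthogonalIdempotents e) {s t : I}
    {x y : A} (hx : IsPath e s t x) (hy : IsPath e t s y) (i : I) :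
    x ⊠ y * 𝓁 (e i) = x ⊠ y * 𝓇 (e i) := by
  classical
  rw [tensor_mul_leftMul, tensor_mul_rightMul, hx.mul_vertex he, hy.vertex_mul he]
  split_ifs
  · rfl
  · rw [map_zero, map_zero, zero_mul, mul_zero]

variable (k) in
/-- The copairing of the Frobenius form on the preprojective algebra of type `D₄`: each path of a
basis is paired with the path that completes it to a longest cycle. -/
noncomputable def copairing (e : Option (Fin 3) → A) (a : Fin 3 ⊕ Fin 3 → A) : Envelope k A :=
  e none ⊠ centreSocle a + centreSocle a ⊠ e none +
    ∑ i, (e (some i) ⊠ leafSocle a i + leafSocle a i ⊠ e (some i)) +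
    ∑ i, (a (.inl i) ⊠ pathOut a i + pathOut a i ⊠ a (.inl i)) +
    ∑ i, (a (.inr i) ⊠ pathIn a i + pathIn a i ⊠ a (.inr i)) +
    ∑ i, loop a i ⊠ loop a i +
    ∑ i, ∑ j, (a (.inl i) * a (.inr j)) ⊠ (a (.inl j) * a (.inr i))

namespace PreprojectiveFamily

variable {e : Option (Fin 3) → A} {a : Fin 3 ⊕ Fin 3 → A}

local notation "𝓍" => loop a
local notation "𝓎" => pathIn a
local notation "𝓏" => pathOut a
local notation "𝓈" => leafSocle a
local notation "𝓌" => centreSocle a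
local notation:max "𝒂" i:max => a (Sum.inl i)
local notation:max "𝒃" i:max => a (Sum.inr i)

variable (h : PreprojectiveFamily (starQuiver (Fin 3)) e a)
include h

lemma copairing_mul_vertex (v : Option (Fin 3)) :
    copairing k e a * 𝓁 (e v) = copairing k e a * 𝓇 (e v) := by
  have he := h.toOrthogonalIdempotents
  have vertex := IsPath.vertex he
  have hin := h.isPath_in
  have hout := h.isPath_out
  simp only [copairing, add_mul, Finset.sum_mul,
    (vertex _).tensor_mul_vertex he h.isPath_centreSocle,
    h.isPath_centreSocle.tensor_mul_vertex he (vertex _),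
    (vertex _).tensor_mul_vertex he (h.isPath_leafSocle _),
    (h.isPath_leafSocle _).tensor_mul_vertex he (vertex _),
    (hin _).tensor_mul_vertex he (h.isPath_pathOut _),
    (h.isPath_pathOut _).tensor_mul_vertex he (hin _),
    (hout _).tensor_mul_vertex he (h.isPath_pathIn _),
    (h.isPath_pathIn _).tensor_mul_vertex he (hout _),
    (h.isPath_loop _).tensor_mul_vertex he (h.isPath_loop _),
    ((hin _).mul (hout _)).tensor_mul_vertex he ((hin _).mul (hout _))]

variable [CharP A 2]

lemma copairing_mul_leftMul_in (g : Fin 3) :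
    copairing k e a * 𝓁 (𝒂 g) =
      𝓌 ⊠ 𝒂 g + 𝒂 g ⊠ 𝓈 g + 𝓍 g ⊠ 𝓎 g + ∑ i, 𝓎 i ⊠ (𝒂 g * 𝒃 i) := by
  have he := h.toOrthogonalIdempotents
  have hin := h.isPath_in
  have cycles : ∑ i, ∑ j, (𝒂 i * 𝒃 j * 𝒂 g) ⊠ (𝒂 j * 𝒃 i) = ∑ i, 𝓎 i ⊠ (𝒂 g * 𝒃 i) := by
    refine Finset.sum_congr rfl fun i _ ↦ ?_
    simp only [mul_assoc, h.out_mul_in, mul_ite, mul_zero, apply_ite 𝓁, map_zero, ite_mul,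
      zero_mul, Finset.sum_ite_eq', Finset.mem_univ, if_true]
    obtain rfl | hi := eq_or_ne i g
    · rw [h.in_mul_out_self, map_zero, mul_zero, mul_zero]
    · rw [h.in_mul_loop hi]
  simp only [copairing, add_mul, Finset.sum_mul, tensor_mul_leftMul, cycles,
    h.centre_mul_leaf (.vertex he none) (hin _), h.centre_mul_leaf h.isPath_centreSocle (hin _),
    h.centre_mul_leaf (hin _) (hin _), h.centre_mul_leaf (h.isPath_pathIn _) (hin _),
    h.centre_mul_leaf (h.isPath_loop _) (hin _), (hin _).vertex_mul he, Option.some_inj,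
    h.pathOut_mul_in, h.out_mul_in, h.leafSocle_mul_in, apply_ite 𝓁, map_zero, ite_mul, zero_mul,
    zero_add, add_zero, Finset.sum_const_zero, Finset.sum_ite_eq', Finset.mem_univ, if_true]
  abel

lemma copairing_mul_rightMul_in (g : Fin 3) :
    copairing k e a * 𝓇 (𝒂 g) =
      𝓌 ⊠ 𝒂 g + 𝒂 g ⊠ 𝓈 g + 𝓍 g ⊠ 𝓎 g + ∑ i, 𝓎 i ⊠ (𝒂 g * 𝒃 i) := by
  have he := h.toOrthogonalIdempotents
  have hin := h.isPath_in
  have loops : ∑ i, 𝓍 i ⊠ (𝒂 g * 𝓍 i) = 𝓍 g ⊠ 𝓎 g := by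
    rw [← Equiv.sum_comp (Equiv.addLeft g), Fin.sum_univ_three]
    simp only [Equiv.coe_addLeft, add_zero]
    rw [h.in_mul_loop_self, h.in_mul_loop (by lia), h.in_mul_loop (by lia), map_zero, mul_zero,
      zero_add, ← add_mul, ← map_add, h.loop_succ_add_loop]
  simp only [copairing, add_mul, Finset.sum_mul, tensor_mul_rightMul, loops,
    h.in_mul_centreSocle, (hin _).2, (hin _).mul_vertex he, reduceCtorEq,
    h.centre_mul_leaf (hin _) (hin _), h.centre_mul_leaf (hin _) (h.isPath_pathIn _),
    h.centre_mul_leaf (hin _) (h.isPath_leafSocle _),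
    h.centre_mul_leaf (hin _) ((hin _).mul (h.isPath_out _)), h.in_mul_pathOut,
    apply_ite 𝓇, map_zero, mul_ite, mul_zero, if_false,
    zero_add, add_zero, Finset.sum_const_zero, Finset.sum_ite_eq, Finset.mem_univ, if_true]
  abel

lemma copairing_mul_leftMul_out (g : Fin 3) :
    copairing k e a * 𝓁 (𝒃 g) =
      𝒃 g ⊠ 𝓌 + 𝓈 g ⊠ 𝒃 g + 𝓏 g ⊠ 𝓍 g + ∑ i, (𝒂 i * 𝒃 g) ⊠ 𝓏 i := by
  have he := h.toOrthogonalIdempotents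
  have hout := h.isPath_out
  have loops : ∑ i, (𝓍 i * 𝒃 g) ⊠ 𝓍 i = 𝓏 g ⊠ 𝓍 g := by
    rw [← Equiv.sum_comp (Equiv.addLeft g), Fin.sum_univ_three]
    simp only [Equiv.coe_addLeft, add_zero]
    rw [h.loop_mul_out_self, h.loop_mul_out (by lia), h.loop_mul_out (by lia), map_zero, zero_mul,
      zero_add, ← mul_add, ← map_add, h.loop_succ_add_loop]
  simp only [copairing, add_mul, Finset.sum_mul, tensor_mul_leftMul, loops,
    h.centreSocle_mul_out, (hout _).1, (hout _).vertex_mul he, reduceCtorEq,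
    h.leaf_mul_centre (hout _) (hout _), h.leaf_mul_centre (h.isPath_pathOut _) (hout _),
    h.leaf_mul_centre (h.isPath_leafSocle _) (hout _),
    h.leaf_mul_centre ((h.isPath_in _).mul (hout _)) (hout _), h.pathIn_mul_out,
    apply_ite 𝓁, map_zero, ite_mul, zero_mul, if_false,
    zero_add, add_zero, Finset.sum_const_zero, Finset.sum_ite_eq', Finset.mem_univ, if_true]
  abel

lemma copairing_mul_rightMul_out (g : Fin 3) :
    copairing k e a * 𝓇 (𝒃 g) =
      𝒃 g ⊠ 𝓌 + 𝓈 g ⊠ 𝒃 g + 𝓏 g ⊠ 𝓍 g + ∑ i, (𝒂 i * 𝒃 g) ⊠ 𝓏 i := by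
  have he := h.toOrthogonalIdempotents
  have hout := h.isPath_out
  have cycles : ∑ i, ∑ j, (𝒂 i * 𝒃 j) ⊠ (𝒃 g * (𝒂 j * 𝒃 i)) = ∑ i, (𝒂 i * 𝒃 g) ⊠ 𝓏 i := by
    refine Finset.sum_congr rfl fun i _ ↦ ?_
    simp only [← mul_assoc, h.out_mul_in, ite_mul, zero_mul, apply_ite 𝓇, map_zero, mul_ite,
      mul_zero, Finset.sum_ite_eq, Finset.mem_univ, if_true]
    obtain rfl | hi := eq_or_ne i g
    · rw [h.in_mul_out_self, map_zero, zero_mul, zero_mul]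
    · rw [h.loop_mul_out hi]
  simp only [copairing, add_mul, Finset.sum_mul, tensor_mul_rightMul, cycles,
    h.leaf_mul_centre (hout _) (.vertex he none), h.leaf_mul_centre (hout _) h.isPath_centreSocle,
    h.leaf_mul_centre (hout _) (hout _), h.leaf_mul_centre (hout _) (h.isPath_pathOut _),
    h.leaf_mul_centre (hout _) (h.isPath_loop _), (hout _).mul_vertex he, Option.some_inj,
    h.out_mul_pathIn, h.out_mul_in, h.out_mul_leafSocle, apply_ite 𝓇, map_zero, mul_ite, mul_zero,
    zero_add, add_zero, Finset.sum_const_zero, Finset.sum_ite_eq, Finset.sum_ite_eq',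
    Finset.mem_univ, if_true]
  abel

end PreprojectiveFamily

end Copairing

section Representation

variable {ι S : Type*} [Fintype ι] [DecidableEq ι] [Ring S]

lemma completeOrthogonalIdempotents_matrix {I : Type*} [Fintype I] [DecidableEq I] :
    CompleteOrthogonalIdempotents fun i : I ↦ Matrix.single i i (1 : S) := by
  have diagonal := (CompleteOrthogonalIdempotents.single fun _ : I ↦ S).map
    (Matrix.diagonalRingHom I S)
  simpa only [Function.comp_def, Matrix.diagonalRingHom_apply, Matrix.diagonal_single]
    using diagonal

lemma preprojectiveFamily_matrix {p q : ι → S} (hpq : ∀ i, p i * q i = 0)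
    (hqp : ∑ i, q i * p i = 0) :
    PreprojectiveFamily (starQuiver ι) (fun v ↦ Matrix.single v v (1 : S))
      (Sum.elim (fun i ↦ Matrix.single (some i) none (p i))
        fun i ↦ Matrix.single none (some i) (q i)) where
  toCompleteOrthogonalIdempotents := completeOrthogonalIdempotents_matrix
  src_mul := by rintro (i | i) <;> simp [starQuiver]
  mul_tgt := by rintro (i | i) <;> simp [starQuiver]
  relation := by
    have centre := congrArg (Matrix.singleAddMonoidHom (none : Option ι) (none : Option ι)) hqp
    simpa [starQuiver, hpq] using centre

/-- A linear form on the preprojective algebra of type `D₄` which vanishes on the paths of a basis,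
except for the longest cycle at each vertex `v`, where its value is `c v`. -/
structure IsCycleForm {k A : Type*} [CommRing k] [Ring A] [Algebra k A] (e : Option (Fin 3) → A)
    (a : Fin 3 ⊕ Fin 3 → A) (c : Option (Fin 3) → k) (τ : A →ₗ[k] k) : Prop where
  vertex : ∀ v, τ (e v) = 0
  arrow : ∀ j, τ (a j) = 0
  loop : ∀ i, τ (loop a i) = 0
  in_mul_out : ∀ i j, τ (a (.inl i) * a (.inr j)) = 0
  pathIn : ∀ i, τ (pathIn a i) = 0
  pathOut : ∀ i, τ (pathOut a i) = 0
  leafSocle : ∀ i, τ (leafSocle a i) = c (some i)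
  centreSocle : τ (centreSocle a) = c none

lemma IsCycleForm.sum {k A : Type*} [CommRing k] [Ring A] [Algebra k A] {e : Option (Fin 3) → A}
    {a : Fin 3 ⊕ Fin 3 → A} {κ : Type*} [Fintype κ] {c : κ → Option (Fin 3) → k}
    {τ : κ → A →ₗ[k] k} (h : ∀ l, IsCycleForm e a (c l) (τ l)) :
    IsCycleForm e a (∑ l, c l) (∑ l, τ l) where
  vertex v := by simp [(h _).vertex]
  arrow j := by simp [(h _).arrow]
  loop i := by simp [(h _).loop]
  in_mul_out i j := by simp [(h _).in_mul_out]
  pathIn i := by simp [(h _).pathIn]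
  pathOut i := by simp [(h _).pathOut]
  leafSocle i := by simp [(h _).leafSocle]
  centreSocle := by simp [(h _).centreSocle]

end Representation

section CycleForm

variable {k A : Type u} [CommRing k] [Ring A] [Algebra k A] {e : Option (Fin 3) → A}
  {a : Fin 3 ⊕ Fin 3 → A}

section BlockEntry

variable {n : Type*} [Fintype n] [DecidableEq n]

/-- The entry `(r, s)` of the block at the vertex `v` of a representation by block matrices. -/
def blockEntry (φ : A →ₐ[k] Matrix (Option (Fin 3)) (Option (Fin 3)) (Matrix n n k))
    (v : Option (Fin 3)) (r s : n) : A →ₗ[k] k :=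
  Matrix.entryLinearMap k k r s ∘ₗ Matrix.entryLinearMap k _ v v ∘ₗ φ.toLinearMap

lemma isCycleForm_blockEntry {p q : Fin 3 → Matrix n n k} (hpq : ∀ i, p i * q i = 0)
    {φ : A →ₐ[k] Matrix (Option (Fin 3)) (Option (Fin 3)) (Matrix n n k)}
    (hφe : ∀ u, φ (e u) = .single u u 1)
    (hin : ∀ i, φ (a (.inl i)) = .single (some i) none (p i))
    (hout : ∀ i, φ (a (.inr i)) = .single none (some i) (q i)) {v : Option (Fin 3)} {r s : n}
    (hrs : r ≠ s) (hloop : v = none → ∀ i, (q i * p i) r s = 0)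
    (hleaf : ∀ i, v = some i → (p i * (q (i + 1) * p (i + 1)) * q i) r s = 1)
    (hcentre : v = none → (q 0 * p 0 * (q 1 * p 1)) r s = 1) :
    IsCycleForm e a (Pi.single v 1) (blockEntry φ v r s) := by
  have entry (x : A) : blockEntry φ v r s x = φ x v v r s := rfl
  have block_eq_zero {i j : Option (Fin 3)} (M : Matrix n n k) (hv : ¬(i = v ∧ j = v)) :
      Matrix.single i j M v v r s = 0 :=
    congrArg (fun N : Matrix n n k ↦ N r s) (Matrix.single_apply_of_ne i j M v v hv)
  constructor <;> simp only [entry]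
  · intro u
    by_cases hu : u = v <;> simp [hφe, hu, hrs]
  · rintro (i | i) <;> cases v <;> simp [hin, hout]
  · intro i
    cases v <;> simp [PathAlgD4.loop, hin, hout, hloop]
  · intro i j
    rw [map_mul, hin, hout, Matrix.single_mul_single_same]
    obtain rfl | hij := eq_or_ne i j
    · simp [hpq]
    · exact block_eq_zero _ fun hv ↦ hij <| Option.some_injective _ <| hv.1.trans hv.2.symm
  · intro i
    cases v <;> simp [PathAlgD4.pathIn, PathAlgD4.loop, hin, hout]
  · intro i
    cases v <;> simp [PathAlgD4.pathOut, PathAlgD4.loop, hin, hout]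
  · intro i
    have map_leafSocle : φ (PathAlgD4.leafSocle a i) =
        .single (some i) (some i) (p i * (q (i + 1) * p (i + 1)) * q i) := by
      simp [PathAlgD4.leafSocle, PathAlgD4.pathIn, PathAlgD4.loop, hin, hout]
    rw [map_leafSocle]
    by_cases hv : v = some i
    · subst hv
      simp [hleaf]
    · rw [Pi.single_eq_of_ne (Ne.symm hv)]
      exact block_eq_zero _ fun hv' ↦ hv hv'.1.symm
  · cases v <;> simp [PathAlgD4.centreSocle, PathAlgD4.loop, hin, hout, hcentre]

end BlockEntry

namespace IsPreprojectiveAlgebra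

variable (h : IsPreprojectiveAlgebra k (starQuiver (Fin 3)) e a)
include h

lemma exists_isCycleForm_of_matrix {n : Type} [Fintype n] {p q : Fin 3 → Matrix n n k}
    (hpq : ∀ i, p i * q i = 0) (hqp : ∑ i, q i * p i = 0) {v : Option (Fin 3)} {r s : n}
    (hrs : r ≠ s) (hloop : v = none → ∀ i, (q i * p i) r s = 0)
    (hleaf : ∀ i, v = some i → (p i * (q (i + 1) * p (i + 1)) * q i) r s = 1)
    (hcentre : v = none → (q 0 * p 0 * (q 1 * p 1)) r s = 1) :
    ∃ τ : A →ₗ[k] k, IsCycleForm e a (Pi.single v 1) τ := by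
  classical
  obtain ⟨φ, hφe, hφa⟩ := h.exists_lift (preprojectiveFamily_matrix hpq hqp)
  exact ⟨_, isCycleForm_blockEntry hpq hφe (fun _ ↦ hφa _) (fun _ ↦ hφa _) hrs hloop hleaf
    hcentre⟩

lemma exists_isCycleForm_leaf [CharP k 2] (t : Fin 3) :
    ∃ τ : A →ₗ[k] k, IsCycleForm e a (Pi.single (some t) 1) τ := by
  have hne : t + 1 ≠ t := by lia
  have hne' : t + 2 ≠ t := by lia
  refine h.exists_isCycleForm_of_matrix
    (p := fun i ↦ if i = t then .single 1 1 1 else .single 0 0 1)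
    (q := fun i ↦ if i = t then .single 0 0 1 else .single 1 0 1) (r := (1 : Fin 2)) (s := 0)
    (fun i ↦ ?_) ?_ one_ne_zero (by simp) (by simp [hne]) (by simp)
  · split_ifs <;> simp
  · rw [← Equiv.sum_comp (Equiv.addLeft t), Fin.sum_univ_three]
    simp [hne, hne', CharTwo.add_self_eq_zero]

lemma exists_isCycleForm_centre [CharP k 2] :
    ∃ τ : A →ₗ[k] k, IsCycleForm e a (Pi.single none 1) τ := by
  -- `q i * p i` is the matrix of multiplication by `loop a i` in the basis `1, x₀, x₁, w` of the
  -- local algebra at the centre, and the entry `(3, 0)` is the coefficient of `w`.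
  refine h.exists_isCycleForm_of_matrix
    (p := ![!![1, 0, 0, 0; 0, 0, 0, 0; 0, 0, 0, 0; 0, 0, 1, 0],
      !![1, 0, 0, 0; 0, 0, 0, 0; 0, 0, 0, 0; 0, 1, 0, 0],
      !![1, 0, 0, 0; 0, 0, 0, 0; 0, 0, 0, 0; 0, 1, 1, 0]])
    (q := ![!![0, 0, 0, 0; 1, 0, 0, 0; 0, 0, 0, 0; 0, 0, 0, 1],
      !![0, 0, 0, 0; 0, 0, 0, 0; 1, 0, 0, 0; 0, 0, 0, 1],
      !![0, 0, 0, 0; 1, 0, 0, 0; 1, 0, 0, 0; 0, 0, 0, 1]]) (r := 3) (s := 0)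
    (fun i ↦ ?_) ?_ (by decide) ?_ (by simp) ?_
  · fin_cases i <;> ext r s <;> fin_cases r <;> fin_cases s <;> simp [CharTwo.add_self_eq_zero]
  · rw [Fin.sum_univ_three]
    ext r s
    fin_cases r <;> fin_cases s <;> simp [CharTwo.add_self_eq_zero]
  · intro _ i
    fin_cases i <;> simp
  · simp

lemma exists_isCycleForm [CharP k 2] : ∃ τ : A →ₗ[k] k, IsCycleForm e a 1 τ := by
  have exists_single : ∀ v, ∃ τ : A →ₗ[k] k, IsCycleForm e a (Pi.single v 1) τ
    | none => h.exists_isCycleForm_centre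
    | some t => h.exists_isCycleForm_leaf t
  choose τ hτ using exists_single
  exact ⟨∑ v, τ v, Finset.univ_sum_single (1 : Option (Fin 3) → k) ▸ IsCycleForm.sum hτ⟩

end IsPreprojectiveAlgebra

end CycleForm

section FrobeniusPair

variable {k A : Type u} [CommRing k] [Ring A] [Algebra k A] {e : Option (Fin 3) → A}
  {a : Fin 3 ⊕ Fin 3 → A}

lemma swap_copairing : swap k A (copairing k e a) = copairing k e a := by
  simp only [copairing, Finset.sum_add_distrib, map_add, map_sum, swap_mul]
  rw [Finset.sum_comm (f := fun i j ↦ leftMul k (a (.inl j) * a (.inr i)) *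
    rightMul k (a (.inl i) * a (.inr j)))]
  abel

lemma PreprojectiveFamily.contractLeft_copairing
    (h : PreprojectiveFamily (starQuiver (Fin 3)) e a) {τ : A →ₗ[k] k}
    (hτ : IsCycleForm e a 1 τ) : contractLeft τ (copairing k e a) = 1 := by
  simp only [copairing, map_add, map_sum, contractLeft_mul, hτ.vertex, hτ.arrow, hτ.loop,
    hτ.in_mul_out, hτ.pathIn, hτ.pathOut, hτ.leafSocle, hτ.centreSocle, Pi.one_apply, one_smul,
    zero_smul, zero_add, add_zero, Finset.sum_const_zero]
  rw [← Fintype.sum_option, h.complete]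

variable [CharP A 2]

lemma IsPreprojectiveAlgebra.isBalanced_copairing
    (h : IsPreprojectiveAlgebra k (starQuiver (Fin 3)) e a) : IsBalanced (copairing k e a) := by
  refine .of_adjoin_eq_top h.adjoin_eq_top ?_
  rintro _ (⟨v, rfl⟩ | ⟨i | i, rfl⟩)
  · exact h.copairing_mul_vertex v
  · rw [h.copairing_mul_leftMul_in, h.copairing_mul_rightMul_in]
  · rw [h.copairing_mul_leftMul_out, h.copairing_mul_rightMul_out]

lemma IsPreprojectiveAlgebra.isFrobeniusPair
    (h : IsPreprojectiveAlgebra k (starQuiver (Fin 3)) e a) {τ : A →ₗ[k] k}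
    (hτ : IsCycleForm e a 1 τ) : IsFrobeniusPair τ (copairing k e a) where
  isBalanced := h.isBalanced_copairing
  swap_eq := swap_copairing
  contractLeft_eq := h.contractLeft_copairing hτ

end FrobeniusPair

section StarCohomology

variable {k A : Type u} [CommRing k] [Ring A] [Algebra k A] {e : Option (Fin 3) → A}
  {a : Fin 3 ⊕ Fin 3 → A}

local notation "𝓁" => leftMul k
local notation "𝓇" => rightMul k
local notation "η" => vertexUnit k e
local notation "ω" => copairing k e a
local notation:75 x:76 " ⊠ " y:76 => 𝓁 x * 𝓇 y
local notation "𝓍" => loop a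
local notation "𝓎" => pathIn a
local notation "𝓏" => pathOut a
local notation "𝓈" => leafSocle a
local notation "𝓌" => centreSocle a
local notation:max "𝒂" i:max => a (Sum.inl i)
local notation:max "𝒃" i:max => a (Sum.inr i)

lemma tensor_smul (x y m : A) : x ⊠ y • m = x * m * y := by
  rw [mul_smul, leftMul_smul, rightMul_smul, mul_assoc]

lemma IsBalanced.smul_mul_comm {z : Envelope k A} (hz : IsBalanced z) (x y : A) :
    z • (x * y) = z • (y * x) := by
  rw [← leftMul_smul k x, ← mul_smul, hz, mul_smul, rightMul_smul]

lemma IsPath.vertexUnit_smul {I : Type} [Fintype I] {e : I → A} (he : OrthogonalIdempotents e)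
    {s : I} {x : A} (hx : IsPath e s s x) : vertexUnit k e • x = x := by
  classical
  simp [PathAlgD4.vertexUnit_smul, hx.vertex_mul he, ite_mul, hx.2]

lemma IsPath.apply_mul_eq_zero {I : Type} [Fintype I] {e : I → A} (he : OrthogonalIdempotents e)
    {τ : A →ₗ[k] k} (hτ : ∀ x y, τ (x * y) = τ (y * x)) {s t : I} (hst : s ≠ t) {p : A}
    (hp : IsPath e s t p) {m : A} (hm : vertexUnit k e • m = m) : τ (m * p) = 0 := by
  classical
  rw [← hm, PathAlgD4.vertexUnit_smul, Finset.sum_mul, map_sum]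
  refine Finset.sum_eq_zero fun v _ ↦ ?_
  rw [mul_assoc, mul_assoc, hτ, mul_assoc, mul_assoc, hp.mul_vertex he, mul_ite, mul_zero,
    hp.vertex_mul he]
  split_ifs with ht hs
  · exact (hst (hs.symm.trans ht)).elim
  all_goals simp

namespace PreprojectiveFamily

variable (h : PreprojectiveFamily (starQuiver (Fin 3)) e a) [CharP A 2]
include h

lemma copairing_smul_centreSocle : ω • 𝓌 = 0 := by
  have he := h.toOrthogonalIdempotents
  have zero {i : Fin 3} {s : Option (Fin 3)} {p : A} (hp : IsPath e s (some i) p) : p * 𝓌 = 0 :=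
    h.leaf_mul_centre hp h.isPath_centreSocle
  simp only [copairing, add_smul, Finset.sum_smul, tensor_smul, h.isPath_centreSocle.1,
    h.centreSocle_mul_self, h.pathIn_mul_centreSocle, h.loop_mul_centreSocle, h.in_mul_centreSocle,
    zero (.vertex he _), zero (h.isPath_leafSocle _), zero (h.isPath_pathOut _),
    zero (h.isPath_out _), zero ((h.isPath_in _).mul (h.isPath_out _)), zero_mul,
    add_zero, Finset.sum_const_zero]

lemma copairing_smul_centre : ω • e none = 0 := by
  have he := h.toOrthogonalIdempotents
  have zero {i : Fin 3} {s : Option (Fin 3)} {p : A} (hp : IsPath e s (some i) p) :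
      p * e none = 0 := h.leaf_mul_centre hp (.vertex he none)
  simp only [copairing, add_smul, Finset.sum_smul, tensor_smul,
    h.isPath_centreSocle.1, h.isPath_centreSocle.2, (h.isPath_loop _).2, (h.isPath_in _).2,
    (h.isPath_pathIn _).2, zero (.vertex he _), zero (h.isPath_leafSocle _),
    zero (h.isPath_pathOut _), zero (h.isPath_out _),
    zero ((h.isPath_in _).mul (h.isPath_out _)), (IsPath.vertex he none).1, zero_mul,
    h.in_mul_pathOut, h.pathIn_mul_out, h.loop_mul_self, CharTwo.add_self_eq_zero, if_true,
    add_zero, zero_add, Finset.sum_const_zero]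

lemma copairing_smul_leaf (i : Fin 3) : ω • e (some i) = ∑ j, 𝓈 j + 𝓈 i := by
  have he := h.toOrthogonalIdempotents
  have cycle (j : Fin 3) : 𝒂 j * 𝒃 i * (𝒂 i * 𝒃 j) = 𝓈 j + if i = j then 𝓈 j else 0 := by
    rw [mul_assoc, ← mul_assoc (𝒃 i), ← loop]
    split_ifs with hij
    · rw [hij, h.loop_mul_out_self, mul_zero, CharTwo.add_self_eq_zero]
    · rw [h.loop_mul_out (Ne.symm hij), h.in_mul_pathOut, if_pos rfl, add_zero]
  simp only [copairing, add_smul, Finset.sum_smul, tensor_smul, cycle,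
    (IsPath.vertex he _).mul_vertex he, h.isPath_centreSocle.mul_vertex he,
    (h.isPath_leafSocle _).mul_vertex he, (h.isPath_in _).mul_vertex he,
    (h.isPath_out _).mul_vertex he, (h.isPath_pathIn _).mul_vertex he,
    (h.isPath_pathOut _).mul_vertex he, (h.isPath_loop _).mul_vertex he,
    ((h.isPath_in _).mul (h.isPath_out _)).mul_vertex he, (h.isPath_leafSocle _).1,
    h.out_mul_pathIn_self, h.pathOut_mul_in, Option.some_inj, reduceCtorEq, ite_mul, zero_mul,
    if_true, if_false, CharTwo.add_self_eq_zero, add_zero, zero_add, Finset.sum_add_distrib,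
    Finset.sum_const_zero, Finset.sum_ite_eq, Finset.mem_univ]

end PreprojectiveFamily

lemma IsBalanced.smul_loop (h : PreprojectiveFamily (starQuiver (Fin 3)) e a) {z : Envelope k A}
    (hz : IsBalanced z) (i : Fin 3) : z • 𝓍 i = 0 := by
  rw [loop, hz.smul_mul_comm, h.in_mul_out_self, smul_zero]

lemma IsPreprojectiveAlgebra.commute_of_isPath {I J : Type} [Fintype I] [Fintype J]
    {Q : DoubleQuiver I J} {e : I → A} {a : J → A} (h : IsPreprojectiveAlgebra k Q e a) {v : I}
    {x : A} (hx : IsPath e v v x) (harrow : ∀ j, a j * x = 0) (harrow' : ∀ j, x * a j = 0)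
    (y : A) : Commute y x := by
  classical
  have he := h.toOrthogonalIdempotents
  have hy : y ∈ Algebra.adjoin k (Set.range e ∪ Set.range a) := h.adjoin_eq_top ▸ Algebra.mem_top
  induction hy using Algebra.adjoin_induction with
  | mem y hy =>
    obtain ⟨i, rfl⟩ | ⟨j, rfl⟩ := hy
    · exact (hx.vertex_mul he i).trans (hx.mul_vertex he i).symm
    · exact (harrow j).trans (harrow' j).symm
  | algebraMap c => exact Algebra.commutes c x
  | add y z _ _ hy hz => exact hy.add_left hz
  | mul y z _ _ hy hz => exact hy.mul_left hz

variable (a) in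
/-- The values of a linear form `τ` on the products with the central elements `s₀`, `w` and `1`. -/
noncomputable def centralPairing (τ : A →ₗ[k] k) : A →ₗ[k] Fin 3 → k :=
  LinearMap.pi ![τ ∘ₗ LinearMap.mulRight k (𝓈 0), τ ∘ₗ LinearMap.mulRight k 𝓌, τ]

lemma centralPairing_apply (τ : A →ₗ[k] k) (m : A) :
    centralPairing a τ m = ![τ (m * 𝓈 0), τ (m * 𝓌), τ m] := by
  ext i
  fin_cases i <;> rfl

lemma coboundary_single {I J : Type} [Fintype J] [DecidableEq J]
    {Q : DoubleQuiver I J} {e : I → A} {a : J → A} {j : J} {x : A}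
    (hx : IsPath e (Q.src j) (Q.tgt j) x) :
    coboundary k Q e a (Pi.single j x) = a (Q.rev j) * x + x * a (Q.rev j) := by
  rw [coboundary_apply, Finset.sum_eq_single j (fun i _ hi ↦ ?_) (by simp)]
  · rw [Pi.single_eq_same, arrowUnit, tensor_smul, hx.1, hx.2, add_smul, leftMul_smul,
      rightMul_smul]
  · rw [Pi.single_eq_of_ne hi, smul_zero, smul_zero]

lemma coboundary_single_in {i : Fin 3} {x : A} (hx : IsPath e (some i) none x) :
    coboundary k (starQuiver (Fin 3)) e a (Pi.single (.inl i) x) = 𝒃 i * x + x * 𝒃 i :=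
  coboundary_single (Q := starQuiver (Fin 3)) (j := .inl i) hx

variable [CharP A 2]

lemma IsBalanced.smul_leafSocle (h : PreprojectiveFamily (starQuiver (Fin 3)) e a)
    {z : Envelope k A} (hz : IsBalanced z) (i : Fin 3) : z • 𝓈 i = z • 𝓌 := by
  rw [leafSocle, hz.smul_mul_comm, h.out_mul_pathIn_self]

namespace IsPreprojectiveAlgebra

variable (h : IsPreprojectiveAlgebra k (starQuiver (Fin 3)) e a) {τ : A →ₗ[k] k}
  (hτ : IsCycleForm e a 1 τ)
include h

lemma commute_leafSocle (i : Fin 3) (x : A) : Commute x (𝓈 i) :=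
  have hs := h.isPath_leafSocle i
  h.commute_of_isPath hs
    (Sum.rec (fun j ↦ h.centre_mul_leaf (h.isPath_in j) hs) (h.out_mul_leafSocle · i))
    (Sum.rec (h.leafSocle_mul_in i) fun j ↦ h.leaf_mul_centre hs (h.isPath_out j)) x

lemma commute_centreSocle (x : A) : Commute x 𝓌 :=
  have hw := h.isPath_centreSocle
  h.commute_of_isPath hw
    (Sum.rec h.in_mul_centreSocle fun j ↦ h.leaf_mul_centre (h.isPath_out j) hw)
    (Sum.rec (fun j ↦ h.centre_mul_leaf hw (h.isPath_in j)) h.centreSocle_mul_out) x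

include hτ

lemma eq_sum_cycles {m : A} (hm : η • m = m) :
    m = τ (m * e none) • 𝓌 + τ (m * 𝓌) • e none +
      ∑ i, (τ (m * e (some i)) • 𝓈 i + τ (m * 𝓈 i) • e (some i)) + ∑ i, τ (m * 𝓍 i) • 𝓍 i := by
  have he := h.toOrthogonalIdempotents
  have hω := h.isFrobeniusPair hτ
  have zero {s t : Option (Fin 3)} {p : A} (hp : IsPath e s t p) (hst : s ≠ t) :
      τ (m * p) = 0 := hp.apply_mul_eq_zero he hω.apply_mul_comm hst hm
  have zero_cycle (i j : Fin 3) : τ (m * (𝒂 i * 𝒃 j)) = 0 := by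
    obtain rfl | hij := eq_or_ne i j
    · rw [h.in_mul_out_self, mul_zero, map_zero]
    · exact zero ((h.isPath_in i).mul (h.isPath_out j)) ((Option.some_injective _).ne hij)
  have into {i : Fin 3} {p : A} (hp : IsPath e (some i) none p) : τ (m * p) = 0 :=
    zero hp (Option.some_ne_none i)
  have out {i : Fin 3} {p : A} (hp : IsPath e none (some i) p) : τ (m * p) = 0 :=
    zero hp (Option.some_ne_none i).symm
  conv_lhs => rw [← hω.contractLeft_leftMul_mul m]
  simp only [copairing, mul_add, Finset.mul_sum, ← mul_assoc, ← map_mul, map_add, map_sum,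
    contractLeft_mul]
  simp only [mul_assoc, zero_cycle, into (h.isPath_in _), into (h.isPath_pathIn _),
    out (h.isPath_out _), out (h.isPath_pathOut _), zero_smul, add_zero, Finset.sum_const_zero]

lemma copairing_smul {m : A} (hm : η • m = m) :
    ω • m = ∑ i, τ (m * 𝓈 i) • (∑ j, 𝓈 j + 𝓈 i) := by
  have hω := h.isBalanced_copairing
  conv_lhs => rw [h.eq_sum_cycles hτ hm]
  simp only [smul_add, Finset.smul_sum, smul_comm (ω) (_ : k), hω.smul_loop h.toPreprojectiveFamily,
    hω.smul_leafSocle h.toPreprojectiveFamily, h.copairing_smul_centreSocle,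
    h.copairing_smul_centre, h.copairing_smul_leaf, smul_zero, zero_add, add_zero,
    Finset.sum_const_zero]

lemma mem_cocycles_iff {m : A} :
    m ∈ cocycles k e (ω) ↔ η • m = m ∧ ∀ i j, τ (m * 𝓈 i) = τ (m * 𝓈 j) := by
  rw [mem_cocycles]
  refine and_congr_right fun hm ↦ ?_
  rw [h.copairing_smul hτ hm]
  constructor
  · intro hzero
    have coefficient (j : Fin 3) : ∑ i, τ (m * 𝓈 i) + τ (m * 𝓈 j) = 0 := by
      have hs (i : Fin 3) : e (some j) * 𝓈 i = if some j = some i then 𝓈 i else 0 :=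
        (h.isPath_leafSocle i).vertex_mul h.toOrthogonalIdempotents _
      simpa [Finset.mul_sum, mul_add, hs, apply_ite τ, hτ.leafSocle, Finset.sum_add_distrib]
        using congrArg (fun x ↦ τ (e (some j) * x)) hzero
    intro i j
    exact add_left_cancel ((coefficient i).trans (coefficient j).symm)
  · intro heq
    have quadruple : ∑ i, (∑ j, 𝓈 j + 𝓈 i) = 0 := by
      rw [Finset.sum_add_distrib, Fin.sum_const, ← succ_nsmul, nsmul_eq_mul, CharTwo.natCast_eq_mod]
      simp
    simp only [heq _ 0, ← Finset.smul_sum, quadruple, smul_zero]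

lemma map_cocycles_centralPairing :
    (cocycles k e (ω)).map (centralPairing a τ) = ⊤ := by
  have he := h.toOrthogonalIdempotents
  have hone : (1 : A) ∈ cocycles k e (ω) := (h.mem_cocycles_iff hτ).2
    ⟨vertexUnit_smul_one h.toCompleteOrthogonalIdempotents, by simp [hτ.leafSocle]⟩
  have hcentre : e none ∈ cocycles k e (ω) := (h.mem_cocycles_iff hτ).2
    ⟨(IsPath.vertex he none).vertexUnit_smul he, by
      simp [(h.isPath_leafSocle _).vertex_mul he]⟩
  have hsocle : 𝓈 0 ∈ cocycles k e (ω) := (h.mem_cocycles_iff hτ).2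
    ⟨(h.isPath_leafSocle 0).vertexUnit_smul he, by simp [h.leafSocle_mul_leafSocle]⟩
  refine (Submodule.eq_top_iff').2 fun c ↦ ⟨c 0 • 1 + (c 1 - c 0) • e none + c 2 • 𝓈 0, ?_, ?_⟩
  · exact add_mem (add_mem (Submodule.smul_mem _ _ hone) (Submodule.smul_mem _ _ hcentre))
      (Submodule.smul_mem _ _ hsocle)
  · have hform : τ 1 = 0 := by
      rw [← h.complete, map_sum]
      exact Finset.sum_eq_zero fun v _ ↦ hτ.vertex v
    simp only [map_add, map_smul, centralPairing_apply, one_mul, hτ.leafSocle, hτ.centreSocle,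
      hform, hτ.vertex, (h.isPath_leafSocle _).vertex_mul he, h.isPath_centreSocle.1,
      h.leafSocle_mul_leafSocle, h.leaf_mul_centre (h.isPath_leafSocle _) h.isPath_centreSocle]
    ext i
    fin_cases i <;> simp

lemma centralPairing_coboundary [CharP k 2] (n : Fin 3 ⊕ Fin 3 → A) :
    centralPairing a τ (coboundary k (starQuiver (Fin 3)) e a n) = 0 := by
  have hcomm := (h.isFrobeniusPair hτ).apply_mul_comm
  have hone := apply_coboundary_mul_eq_zero (Q := starQuiver (Fin 3)) (e := e) (a := a) hcomm
    Commute.one_right n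
  rw [mul_one] at hone
  rw [centralPairing_apply, apply_coboundary_mul_eq_zero hcomm fun x ↦ h.commute_leafSocle 0 x,
    apply_coboundary_mul_eq_zero hcomm h.commute_centreSocle, hone]
  simp

lemma mem_range_coboundary [CharP k 2] {m : A} (hm : m ∈ cocycles k e (ω))
    (hzero : centralPairing a τ m = 0) :
    m ∈ LinearMap.range (coboundary k (starQuiver (Fin 3)) e a) := by
  obtain ⟨hη, hsocles⟩ := (h.mem_cocycles_iff hτ).1 hm
  have hleafSocle (i : Fin 3) : τ (m * 𝓈 i) = 0 := (hsocles i 0).trans (congrFun hzero 0)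
  have hcentreSocle : τ (m * 𝓌) = 0 := congrFun hzero 1
  have hcentre : τ (m * e none) = ∑ i, τ (m * e (some i)) := by
    rw [← CharTwo.add_eq_zero, ← map_sum, ← map_add, ← Finset.mul_sum, ← mul_add,
      ← Fintype.sum_option, h.complete, mul_one]
    exact congrFun hzero 2
  have expand : m = ∑ i, (τ (m * e (some i)) • (𝓌 + 𝓈 i) + τ (m * 𝓍 i) • 𝓍 i) := by
    conv_lhs => rw [h.eq_sum_cycles hτ hη]
    simp only [hleafSocle, hcentreSocle, hcentre, zero_smul, add_zero, smul_add,
      Finset.sum_add_distrib, Finset.sum_smul]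
  have hloop (i : Fin 3) : coboundary k (starQuiver (Fin 3)) e a (Pi.single (.inl i) (𝒂 i)) =
      𝓍 i := by
    rw [coboundary_single_in (h.isPath_in i), h.in_mul_out_self, add_zero, loop]
  have hsocle (i : Fin 3) : coboundary k (starQuiver (Fin 3)) e a (Pi.single (.inl i) (𝓎 i)) =
      𝓌 + 𝓈 i := by
    rw [coboundary_single_in (h.isPath_pathIn i), h.out_mul_pathIn_self, leafSocle]
  rw [expand]
  exact sum_mem fun i _ ↦ add_mem (Submodule.smul_mem _ _ ⟨_, hsocle i⟩)
    (Submodule.smul_mem _ _ ⟨_, hloop i⟩)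

lemma submoduleOf_range_coboundary [CharP k 2] :
    (LinearMap.range (coboundary k (starQuiver (Fin 3)) e a)).submoduleOf (cocycles k e (ω)) =
      LinearMap.ker ((centralPairing a τ).domRestrict (cocycles k e (ω))) := by
  ext m
  rw [Submodule.submoduleOf, Submodule.mem_comap, LinearMap.mem_ker, LinearMap.domRestrict_apply]
  refine ⟨?_, h.mem_range_coboundary hτ m.2⟩
  rintro ⟨n, hn⟩
  exact (congrArg _ hn.symm).trans (h.centralPairing_coboundary hτ n)

end IsPreprojectiveAlgebra

end StarCohomology

lemma IsPreprojectiveAlgebra.finrank_HH2 {k A : Type} [Field k] [CharP k 2] [Ring A] [Algebra k A]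
    {e : Option (Fin 3) → A} {a : Fin 3 ⊕ Fin 3 → A}
    (h : IsPreprojectiveAlgebra k (starQuiver (Fin 3)) e a) :
    Module.finrank k (HH2 k A) = 3 := by
  obtain ⟨τ, hτ⟩ := h.exists_isCycleForm
  have nontrivial : Nontrivial A := ⟨centreSocle a, 0, fun hzero ↦ one_ne_zero (α := k) <| by
    rw [← Pi.one_apply (M := fun _ ↦ k) none, ← hτ.centreSocle, hzero, map_zero]⟩
  have charP := charP_of_injective_algebraMap (algebraMap k A).injective 2
  have hω := h.isFrobeniusPair hτ
  have surjective : Function.Surjective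
      ((centralPairing a τ).domRestrict (cocycles k e (copairing k e a))) := by
    rw [← LinearMap.range_eq_top, LinearMap.range_domRestrict, h.map_cocycles_centralPairing hτ]
  rw [(hochschildTwoEquiv h hω).finrank_eq, h.submoduleOf_range_coboundary hτ,
    (LinearMap.quotKerEquivOfSurjective _ surjective).finrank_eq, Module.finrank_fin_fun]

section Presentation

/-- The name in `Q` of a vertex of the star: the centre is the vertex `4`. -/
def vertexName : Option (Fin 3) → QGen
  | none => .e4
  | some i => ![.e1, .e2, .e3] i

/-- The name in `Q` of an arrow of the double of the star. -/
def arrowName : Fin 3 ⊕ Fin 3 → QGen :=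
  Sum.elim ![.α, .ξ, .γ] ![.β, .ε, .δ]

lemma vertexName_injective : Function.Injective vertexName := by
  decide

lemma isVertex_iff {g : QGen} : IsVertex g ↔ ∃ v, vertexName v = g := by
  constructor
  · rintro (rfl | rfl | rfl | rfl)
    exacts [⟨some 0, rfl⟩, ⟨some 1, rfl⟩, ⟨some 2, rfl⟩, ⟨none, rfl⟩]
  · rintro ⟨v, rfl⟩
    revert v
    simp only [IsVertex]
    decide

lemma isArrow_iff {g : QGen} : IsArrow g ↔ ∃ j, arrowName j = g := by
  constructor
  · rintro (rfl | rfl | rfl | rfl | rfl | rfl)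
    exacts [⟨.inl 0, rfl⟩, ⟨.inr 0, rfl⟩, ⟨.inl 2, rfl⟩, ⟨.inr 2, rfl⟩, ⟨.inr 1, rfl⟩,
      ⟨.inl 1, rfl⟩]
  · rintro ⟨j, rfl⟩
    revert j
    simp only [IsArrow]
    decide

lemma src_arrowName (j : Fin 3 ⊕ Fin 3) :
    src (arrowName j) = vertexName ((starQuiver (Fin 3)).src j) := by
  revert j; decide

lemma tgt_arrowName (j : Fin 3 ⊕ Fin 3) :
    tgt (arrowName j) = vertexName ((starQuiver (Fin 3)).tgt j) := by
  revert j; decide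

/-- The assignment of values to the generators of `KQ` given by values at the vertices and arrows
of the double of the star. -/
def genValue {T : Type*} (e : Option (Fin 3) → T) (a : Fin 3 ⊕ Fin 3 → T) : QGen → T
  | .e1 => e (some 0)
  | .e2 => e (some 1)
  | .e3 => e (some 2)
  | .e4 => e none
  | .α => a (.inl 0)
  | .ξ => a (.inl 1)
  | .γ => a (.inl 2)
  | .β => a (.inr 0)
  | .ε => a (.inr 1)
  | .δ => a (.inr 2)

lemma genValue_vertexName {T : Type*} (e : Option (Fin 3) → T) (a : Fin 3 ⊕ Fin 3 → T)
    (v : Option (Fin 3)) : genValue e a (vertexName v) = e v := by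
  rcases v with _ | i
  · rfl
  · fin_cases i <;> rfl

lemma genValue_arrowName {T : Type*} (e : Option (Fin 3) → T) (a : Fin 3 ⊕ Fin 3 → T)
    (j : Fin 3 ⊕ Fin 3) : genValue e a (arrowName j) = a j := by
  rcases j with i | i <;> fin_cases i <;> rfl

variable {K} {T : Type} [Ring T] [Algebra K T] {e : Option (Fin 3) → T} {a : Fin 3 ⊕ Fin 3 → T}

variable (K) in
/-- The quotient map `KQ → A₁`. -/
noncomputable def mkA1 : PathAlg K →ₐ[K] AlgA1 K :=
  { RingCon.mk' (idealA1 K).ringCon with commutes' := fun _ ↦ rfl }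

lemma mkA1_eq_zero {x : PathAlg K} (hx : x ∈ idealA1 K) : mkA1 K x = 0 :=
  (RingCon.eq _).2 ((TwoSidedIdeal.mem_iff _ _).1 hx)

namespace PreprojectiveFamily

variable (h : PreprojectiveFamily (starQuiver (Fin 3)) e a)
include h

lemma lift_genValue_eq {x y : FreeAlgebra K QGen} (hxy : PathRel K x y) :
    FreeAlgebra.lift K (genValue e a) x = FreeAlgebra.lift K (genValue e a) y := by
  have he := h.toOrthogonalIdempotents
  have harrow (j) : IsPath e _ _ (a j) := ⟨h.src_mul j, h.mul_tgt j⟩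
  cases hxy with
  | vertex_mul v w hv hw =>
    obtain ⟨v, rfl⟩ := isVertex_iff.1 hv
    obtain ⟨w, rfl⟩ := isVertex_iff.1 hw
    simp only [vertexName_injective.eq_iff, apply_ite (FreeAlgebra.lift K _), map_mul, map_zero,
      FreeAlgebra.lift_ι_apply, genValue_vertexName, he.mul_eq]
  | vertex_sum =>
    have complete := h.complete
    rw [Fintype.sum_option, Fin.sum_univ_three, add_comm] at complete
    simpa [genValue] using complete
  | src_mul b hb =>
    obtain ⟨j, rfl⟩ := isArrow_iff.1 hb
    simp only [src_arrowName, map_mul, FreeAlgebra.lift_ι_apply, genValue_vertexName,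
      genValue_arrowName, h.src_mul]
  | mul_tgt b hb =>
    obtain ⟨j, rfl⟩ := isArrow_iff.1 hb
    simp only [tgt_arrowName, map_mul, FreeAlgebra.lift_ι_apply, genValue_vertexName,
      genValue_arrowName, h.mul_tgt]
  | orth_mul v b hv hb hne =>
    obtain ⟨v, rfl⟩ := isVertex_iff.1 hv
    obtain ⟨j, rfl⟩ := isArrow_iff.1 hb
    rw [src_arrowName, vertexName_injective.ne_iff] at hne
    simp only [map_mul, FreeAlgebra.lift_ι_apply, genValue_vertexName, genValue_arrowName,
      map_zero, (harrow j).vertex_mul he, if_neg hne]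
  | mul_orth b v hb hv hne =>
    obtain ⟨v, rfl⟩ := isVertex_iff.1 hv
    obtain ⟨j, rfl⟩ := isArrow_iff.1 hb
    rw [tgt_arrowName, vertexName_injective.ne_iff] at hne
    simp only [map_mul, FreeAlgebra.lift_ι_apply, genValue_vertexName, genValue_arrowName,
      map_zero, (harrow j).mul_vertex he, if_neg hne]

lemma exists_pathAlg_lift :
    ∃ φ : PathAlg K →ₐ[K] T, ∀ g, φ (gen K g) = genValue e a g :=
  ⟨RingQuot.liftAlgHom K ⟨FreeAlgebra.lift K (genValue e a), fun _ _ ↦ h.lift_genValue_eq⟩,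
    fun g ↦ by rw [gen, RingQuot.liftAlgHom_mkAlgHom_apply, FreeAlgebra.lift_ι_apply]⟩

lemma idealA1_le_ker {φ : PathAlg K →ₐ[K] T} (hφ : ∀ g, φ (gen K g) = genValue e a g) :
    idealA1 K ≤ TwoSidedIdeal.ker φ := by
  refine TwoSidedIdeal.span_le.2 ?_
  rintro x (rfl | rfl | rfl | rfl) <;>
    simp only [SetLike.mem_coe, TwoSidedIdeal.mem_ker, map_add, map_mul, hφ, genValue]
  · exact h.in_mul_out_self 0
  · exact h.in_mul_out_self 1
  · exact h.in_mul_out_self 2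
  · rw [← h.sum_loop, Fin.sum_univ_three, loop, loop, loop, add_right_comm]

lemma exists_algA1_lift :
    ∃ φ : AlgA1 K →ₐ[K] T, ∀ g, φ (mkA1 K (gen K g)) = genValue e a g := by
  obtain ⟨φ, hφ⟩ := h.exists_pathAlg_lift (K := K)
  have hker (x y : PathAlg K) (hxy : (idealA1 K).ringCon x y) : φ x = φ y := by
    rw [← sub_eq_zero, ← map_sub]
    exact (TwoSidedIdeal.mem_ker _).1 (h.idealA1_le_ker hφ ((TwoSidedIdeal.rel_iff _ _ _).1 hxy))
  exact ⟨{ (idealA1 K).ringCon.lift φ.toRingHom hker with commutes' := φ.commutes }, hφ⟩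

end PreprojectiveFamily

variable (K)

lemma gen_mul_gen (v w : Option (Fin 3)) :
    gen K (vertexName v) * gen K (vertexName w) = if v = w then gen K (vertexName v) else 0 := by
  have relation := RingQuot.mkAlgHom_rel K <| PathRel.vertex_mul (K := K) _ _
    (isVertex_iff.2 ⟨v, rfl⟩) (isVertex_iff.2 ⟨w, rfl⟩)
  simp only [map_mul, vertexName_injective.eq_iff, apply_ite (RingQuot.mkAlgHom K _), map_zero]
    at relation
  exact relation

lemma gen_src_mul (j : Fin 3 ⊕ Fin 3) :
    gen K (vertexName ((starQuiver (Fin 3)).src j)) * gen K (arrowName j) =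
      gen K (arrowName j) := by
  have relation := RingQuot.mkAlgHom_rel K <| PathRel.src_mul (K := K) _ (isArrow_iff.2 ⟨j, rfl⟩)
  rwa [map_mul, src_arrowName] at relation

lemma gen_mul_tgt (j : Fin 3 ⊕ Fin 3) :
    gen K (arrowName j) * gen K (vertexName ((starQuiver (Fin 3)).tgt j)) =
      gen K (arrowName j) := by
  have relation := RingQuot.mkAlgHom_rel K <| PathRel.mul_tgt (K := K) _ (isArrow_iff.2 ⟨j, rfl⟩)
  rwa [map_mul, tgt_arrowName] at relation

lemma sum_gen_vertexName : ∑ v, gen K (vertexName v) = 1 := by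
  have relation := RingQuot.mkAlgHom_rel K (PathRel.vertex_sum (K := K))
  rw [map_one, map_add] at relation
  rw [Fintype.sum_option, Fin.sum_univ_three, add_comm, ← relation, map_add, map_add]
  rfl

lemma sum_arrow_mul_rev_mem_idealA1 :
    ∑ j, gen K (arrowName j) * gen K (arrowName ((starQuiver (Fin 3)).rev j)) ∈ idealA1 K := by
  have mem {x : PathAlg K} (hx : x ∈ _) : x ∈ idealA1 K := TwoSidedIdeal.subset_span hx
  rw [Fintype.sum_sum_type, Fin.sum_univ_three, Fin.sum_univ_three]
  refine add_mem (add_mem (add_mem (mem ?_) (mem ?_)) (mem ?_)) ?_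
  · exact .inl rfl
  · exact .inr (.inl rfl)
  · exact .inr (.inr (.inl rfl))
  · rw [add_right_comm]
    exact mem (.inr (.inr (.inr rfl)))

lemma preprojectiveFamily_algA1 :
    PreprojectiveFamily (starQuiver (Fin 3)) (fun v ↦ mkA1 K (gen K (vertexName v)))
      (fun j ↦ mkA1 K (gen K (arrowName j))) where
  idem v := by rw [IsIdempotentElem, ← map_mul, gen_mul_gen, if_pos rfl]
  ortho v w hvw := by
    dsimp only
    rw [← map_mul, gen_mul_gen, if_neg hvw, map_zero]
  complete := by rw [← map_sum, sum_gen_vertexName, map_one]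
  src_mul j := by rw [← map_mul, gen_src_mul]
  mul_tgt j := by rw [← map_mul, gen_mul_tgt]
  relation := by
    simp only [← map_mul, ← map_sum]
    exact mkA1_eq_zero (sum_arrow_mul_rev_mem_idealA1 K)

lemma adjoin_gen_eq_top :
    Algebra.adjoin K (Set.range (fun v ↦ mkA1 K (gen K (vertexName v))) ∪
      Set.range fun j ↦ mkA1 K (gen K (arrowName j))) = ⊤ := by
  have surjective : Function.Surjective ((mkA1 K).comp (RingQuot.mkAlgHom K (PathRel K))) :=
    (RingCon.mk'_surjective _).comp (RingQuot.mkAlgHom_surjective K _)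
  have cover : Set.range vertexName ∪ Set.range arrowName = Set.univ := by
    refine Set.eq_univ_of_forall fun g ↦ ?_
    rw [Set.mem_union, Set.mem_range, Set.mem_range]
    cases g <;> decide
  rw [← AlgHom.range_eq_top, ← Algebra.map_top, ← FreeAlgebra.adjoin_range_ι, AlgHom.map_adjoin,
    ← Set.image_univ, ← cover, Set.image_union, Set.image_union, ← Set.range_comp, ← Set.range_comp,
    ← Set.range_comp, ← Set.range_comp] at surjective
  exact surjective

lemma isPreprojectiveAlgebra_algA1 :
    IsPreprojectiveAlgebra K (starQuiver (Fin 3)) (fun v ↦ mkA1 K (gen K (vertexName v)))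
      (fun j ↦ mkA1 K (gen K (arrowName j))) where
  toPreprojectiveFamily := preprojectiveFamily_algA1 K
  adjoin_eq_top := adjoin_gen_eq_top K
  exists_lift h := by
    obtain ⟨φ, hφ⟩ := h.exists_algA1_lift (K := K)
    exact ⟨φ, fun v ↦ by rw [hφ, genValue_vertexName], fun j ↦ by rw [hφ, genValue_arrowName]⟩

theorem finrank_HH2_A1_general (K : Type) [Field K] [CharP K 2] :
    Module.finrank K (HH2 K (AlgA1 K)) = 3 :=
  (isPreprojectiveAlgebra_algA1 K).finrank_HH2

end Presentation

/-- For the preprojective algebra `A₁ = KQ/I′` of type `D₄` over an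
algebraically closed field `K` of characteristic `2`, the second Hochschild cohomology
group `HH²(A₁)` is a `K`-vector space of dimension `3`. -/
theorem finrank_HH2_A1 (K : Type) [Field K] [IsAlgClosed K] [CharP K 2] :
    Module.finrank K (HH2 K (AlgA1 K)) = 3 :=
  finrank_HH2_A1_general K
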